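/- Let Γ ⊂ PSL(3,ℂ) be a discrete group and let Ω ⊆ ℙ²_ℂ be either Eq(Γ), the Kulkarni discontinuity region Ω(Γ), or a maximal open set on which Γ acts properly discontinuously, with 4 ≤ LiG(Ω) < ∞. Let ℒ be a family of complex lines in general position contained in ℙ²_ℂ∖Ω with card(ℒ) = LiG(Ω). Then ℒ has exactly two vertices. -/

import Mathlib

/-!
*Limits.*  Let `limCone Γ` be the closed cone of all limits of rescaled matrices representing
elements of `Γ`, and `regularSet Γ` the set of points that no nonzero limit matrix kills.  If
distinct `γₙ ∈ Γ` with `Γ` discrete carry points near `a` to points near `b`, then the rescaled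
lifts of `γₙ` and `γₙ⁻¹` have nonzero limits `τ` and `σ` with `τ σ = 0`.  If `σ` does not kill `b`,
it carries `b` to `a`, whence `τ` kills `a`; so `a` and `b` are not both regular.  Therefore the
regular set is contained in `Ω` in each of the three cases, and every line of `Ωᶜ` consists of
points killed by limit matrices.  A subgroup of finite index in `Γ` has the same regular set.

*Vertices.*  By maximality of `L`, every line of `Ωᶜ` passes through one of the finitely many
double points of `L`.  Hence the vertices are exactly the points lying on infinitely many lines of
`Ωᶜ`; they form a finite `Γ`-invariant set, and only finitely many lines of `Ωᶜ` avoid all of them.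

*Counting.*  Suppose that the number of vertices is not two.  Without a vertex there are only
finitely many lines in `Ωᶜ`, and a subgroup `H` of finite index preserves the sides of a triangle.
With one vertex, finitely many lines of `Ωᶜ` avoid it, at least two of them belong to `L`, and a
subgroup `H` of finite index fixes the vertex and these two lines.  With three or more vertices, a
subgroup `H` of finite index fixes three points.  Either `H` preserves a triangle, and then its
limit matrices only kill points on the sides, or all its elements are perspectivities `a + u ⊗ φ`
with a common axis or a common center.  In that situation discreteness enters: if conjugation by `g`
shrinks `c - 1` by a factor `α` with `|α| < 1`, the conjugates `gᵏ c g⁻ᵏ = 1 + αᵏ (c - 1)` tend to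
`1`, so `c = 1`.  Applied to commutators `c`, this leaves groups all of whose `a` have modulus one
and groups with both a common axis and a common center.  In every case the points killed by the
limit matrices of `H` lie on at most three lines, or on a line and one further point, so they
contain at most three lines, while `Ωᶜ` contains at least four.
-/

open scoped LinearAlgebra.Projectivization
open Projectivization Matrix Topology

noncomputable section

abbrev V3 : Type := Fin 3 → ℂ
abbrev SL3 := Matrix.SpecialLinearGroup (Fin 3) ℂ
abbrev PSL3 := SL3 ⧸ Subgroup.center SL3
abbrev P2 := ℙ ℂ V3

instance : TopologicalSpace P2 := instTopologicalSpaceQuotient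

/-- The action of `SL(3,ℂ)` on `ℙ²_ℂ`. -/
def smulP2 (A : SL3) : P2 → P2 :=
  Projectivization.map ((Matrix.SpecialLinearGroup.toLin' A : V3 ≃ₗ[ℂ] V3) : V3 →ₗ[ℂ] V3)
    (Matrix.SpecialLinearGroup.toLin' A).injective

lemma smulP2_mk (A : SL3) (v : V3) (hv : v ≠ 0) :
    smulP2 A (Projectivization.mk ℂ v hv) =
      Projectivization.mk ℂ (Matrix.SpecialLinearGroup.toLin' A v)
        ((Matrix.SpecialLinearGroup.toLin' A).map_ne_zero_iff.mpr hv) := rfl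

lemma smulP2_one : smulP2 (1 : SL3) = id := by
  funext x
  induction x using Projectivization.ind with
  | h v hv => simp [smulP2_mk]

lemma smulP2_mul (A B : SL3) : smulP2 (A * B) = smulP2 A ∘ smulP2 B := by
  funext x
  induction x using Projectivization.ind with
  | h v hv =>
    simp only [smulP2_mk, Function.comp_apply, _root_.map_mul]
    rfl

lemma continuous_smulP2 (A : SL3) : Continuous (smulP2 A) := by
  unfold smulP2 Projectivization.map
  exact Continuous.quotient_map'
    ((((Matrix.SpecialLinearGroup.toLin' A : V3 ≃ₗ[ℂ] V3) :
        V3 →ₗ[ℂ] V3).continuous_of_finiteDimensional.comp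
      continuous_subtype_val).subtype_mk _) _
lemma smulP2_center (A : SL3) (hA : A ∈ Subgroup.center SL3) : smulP2 A = id := by
  obtain ⟨r, hr3, hrA⟩ := Matrix.SpecialLinearGroup.mem_center_iff.mp hA
  have hr0 : r ≠ 0 := by
    intro h
    rw [h] at hr3
    simp at hr3
  funext x
  induction x using Projectivization.ind with
  | h v hv =>
    have hAv : Matrix.SpecialLinearGroup.toLin' A v = r • v := by
      rw [Matrix.SpecialLinearGroup.toLin'_apply]
      have : ((A : Matrix (Fin 3) (Fin 3) ℂ)) = Matrix.scalar (Fin 3) r := by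
        rw [← hrA]
      rw [this]
      funext i
      simp [Matrix.toLin'_apply, Matrix.scalar, Matrix.mulVec_diagonal]
  
    simp only [smulP2_mk, id_eq]
    rw [Projectivization.mk_eq_mk_iff]
    exact ⟨Units.mk0 r hr0, by simp [hAv]⟩

/-- The action of `SL(3,ℂ)` on `ℙ²` as a homomorphism into permutations. -/
def slPerm : SL3 →* Equiv.Perm P2 where
  toFun A :=
    { toFun := smulP2 A
      invFun := smulP2 A⁻¹
      left_inv := fun x => by
        have := (smulP2_mul A⁻¹ A).symm
        simp only [inv_mul_cancel, smulP2_one] at this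
        exact congrFun this x
      right_inv := fun x => by
        have := (smulP2_mul A A⁻¹).symm
        simp only [mul_inv_cancel, smulP2_one] at this
        exact congrFun this x }
  map_one' := by
    ext x
    simp [smulP2_one]
  map_mul' A B := by
    ext x
    simp [smulP2_mul]

/-- The action of `PSL(3,ℂ)` on `ℙ²` as a homomorphism into permutations. -/
def actHom : PSL3 →* Equiv.Perm P2 :=
  QuotientGroup.lift (Subgroup.center SL3) slPerm (by
    intro A hA
    ext x
    simpa [slPerm] using congrFun (smulP2_center A hA) x)

/-- The action of an element of `PSL(3,ℂ)` on `ℙ²`. -/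
def pact (g : PSL3) : P2 → P2 := actHom g

instance : MulAction PSL3 P2 where
  smul g x := pact g x
  one_smul x := by
    show pact 1 x = x
    simp [pact]
  mul_smul g h x := by
    show pact (g * h) x = pact g (pact h x)
    simp [pact]

lemma pact_mk (A : SL3) : pact ((QuotientGroup.mk A : PSL3)) = smulP2 A := by
  funext x
  simp [pact, actHom, slPerm]

lemma continuous_pact (g : PSL3) : Continuous (pact g) := by
  obtain ⟨A, rfl⟩ := QuotientGroup.mk_surjective g
  rw [pact_mk]
  exact continuous_smulP2 A

/-- The action of an element of `PSL(3,ℂ)` on `ℙ²`, as a continuous map. -/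
def pactCM (g : PSL3) : C(P2, P2) := ⟨pact g, continuous_pact g⟩
instance : TopologicalSpace SL3 := instTopologicalSpaceSubtype

/-- A complex line in `ℙ²_ℂ`: the set of points whose representing vectors lie in
a fixed 2-dimensional complex linear subspace of `ℂ³`. -/
def IsLine (ℓ : Set P2) : Prop :=
  ∃ W : Submodule ℂ V3, Module.finrank ℂ W = 2 ∧ ℓ = {p : P2 | p.submodule ≤ W}

/-- The set of complex lines contained in a given subset of `ℙ²_ℂ`. -/
def linesIn (S : Set P2) : Set (Set P2) := {ℓ | IsLine ℓ ∧ ℓ ⊆ S}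

/-- A family of lines is in general position if no point lies on three
(pairwise distinct) lines of the family. -/
def InGenPos (L : Set (Set P2)) : Prop :=
  ∀ p : P2, ∀ ℓ₁ ∈ L, ∀ ℓ₂ ∈ L, ∀ ℓ₃ ∈ L,
    p ∈ ℓ₁ → p ∈ ℓ₂ → p ∈ ℓ₃ → ℓ₁ = ℓ₂ ∨ ℓ₁ = ℓ₃ ∨ ℓ₂ = ℓ₃

/-- The families of complex lines in general position contained in the complement of `Ω`. -/
def genFamilies (Ω : Set P2) : Set (Set (Set P2)) :=
  {L | (∀ ℓ ∈ L, IsLine ℓ ∧ ℓ ⊆ Ωᶜ) ∧ InGenPos L}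

/-- `Li Ω` : the number (in `ℕ∞`) of complex lines contained in the complement of `Ω`. -/
def Li (Ω : Set P2) : ℕ∞ := (linesIn Ωᶜ).encard

/-- `LiG Ω` : the maximal number (in `ℕ∞`) of complex lines in general position contained
in the complement of `Ω`. -/
def LiG (Ω : Set P2) : ℕ∞ := ⨆ L ∈ genFamilies Ω, L.encard

/-- `Γ` acts properly discontinuously on the nonempty open invariant set `Ω`. -/
def ActsPropDiscOn (Γ : Subgroup PSL3) (Ω : Set P2) : Prop :=
  Ω.Nonempty ∧ IsOpen Ω ∧ (∀ γ ∈ Γ, pact γ '' Ω = Ω) ∧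
    ∀ K : Set P2, K ⊆ Ω → IsCompact K →
      {γ : PSL3 | γ ∈ Γ ∧ ((pact γ '' K) ∩ K).Nonempty}.Finite

/-- `Ω` is a maximal open set on which `Γ` acts properly discontinuously. -/
def MaxDisc (Γ : Subgroup PSL3) (Ω : Set P2) : Prop :=
  ActsPropDiscOn Γ Ω ∧ ∀ Ω' : Set P2, ActsPropDiscOn Γ Ω' → Ω ⊆ Ω' → Ω' = Ω

/-- `L0 Γ` : the closure of the set of points with infinite isotropy group. -/
def L0 (Γ : Subgroup PSL3) : Set P2 :=
  closure {z : P2 | {γ : PSL3 | γ ∈ Γ ∧ pact γ z = z}.Infinite}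

/-- The cluster points of the orbit `Γ z`. -/
def orbitCluster (Γ : Subgroup PSL3) (z : P2) : Set P2 :=
  {w : P2 | ∀ U ∈ nhds w, {γ : PSL3 | γ ∈ Γ ∧ pact γ z ∈ U}.Infinite}

/-- The cluster points of `Γ K` for a set `K`. -/
def setCluster (Γ : Subgroup PSL3) (K : Set P2) : Set P2 :=
  {w : P2 | ∀ U ∈ nhds w, {γ : PSL3 | γ ∈ Γ ∧ ((pact γ '' K) ∩ U).Nonempty}.Infinite}

/-- `L1 Γ` : the closure of the set of cluster points of orbits `Γ z`, `z ∉ L0 Γ`. -/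
def L1 (Γ : Subgroup PSL3) : Set P2 :=
  closure (⋃ z ∈ (L0 Γ)ᶜ, orbitCluster Γ z)

/-- `L2 Γ` : the closure of the set of cluster points of `Γ K`,
`K` a compact subset of `ℙ²_ℂ ∖ (L0 Γ ∪ L1 Γ)`. -/
def L2 (Γ : Subgroup PSL3) : Set P2 :=
  closure (⋃ K ∈ {K : Set P2 | IsCompact K ∧ K ⊆ (L0 Γ ∪ L1 Γ)ᶜ}, setCluster Γ K)

/-- The Kulkarni limit set `Λ(Γ)`. -/
def kulkarniLimit (Γ : Subgroup PSL3) : Set P2 := L0 Γ ∪ L1 Γ ∪ L2 Γ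

/-- The Kulkarni discontinuity region `Ω(Γ)`. -/
def kulkarniRegion (Γ : Subgroup PSL3) : Set P2 := (kulkarniLimit Γ)ᶜ

/-- `C(Γ)` : the closure of the union of the Kulkarni limit sets of the cyclic
subgroups generated by the elements of `Γ`. -/
def CSet (Γ : Subgroup PSL3) : Set P2 :=
  closure (⋃ γ ∈ Γ, kulkarniLimit (Subgroup.zpowers γ))

/-- The equicontinuity set of `Γ` : points having a neighborhood `U` on which the
restrictions of the elements of `Γ` form a normal family, i.e. a relatively compact
subset of `C(U, ℙ²_ℂ)` for the compact-open topology. -/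
def eqSet (Γ : Subgroup PSL3) : Set P2 :=
  {z : P2 | ∃ U : Set P2, IsOpen U ∧ z ∈ U ∧
    IsCompact (closure {f : C(U, P2) | ∃ γ ∈ Γ, f = (pactCM γ).restrict U})}

/-- A vertex of a family `L` of lines lying in the complement of `Ω`. -/
def IsVertex (Ω : Set P2) (L : Set (Set P2)) (v : P2) : Prop :=
  ∃ ℓ₁ ∈ L, ∃ ℓ₂ ∈ L, ℓ₁ ≠ ℓ₂ ∧ ∃ C : Set (Set P2), C.Infinite ∧
    (∀ ℓ ∈ C, IsLine ℓ ∧ ℓ ⊆ Ωᶜ) ∧ ℓ₁ ∩ ℓ₂ ∩ ⋂₀ C = {v}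

open Classical

/-- Projection from the point `p` onto the line determined by `W` : `projPt p W x` is
the intersection point of the line through `p` and `x` with the line determined by `W`
(junk value if it is not unique). -/
def projPt (p : P2) (W : Submodule ℂ V3) (x : P2) : P2 :=
  if h : ∃ y : P2, y.submodule ≤ W ∧ y.submodule ≤ p.submodule ⊔ x.submodule
  then h.choose else x

open Filter Pointwise

/-- The `3 × 3` complex matrices, which contain all limits of rescaled elements of `SL(3,ℂ)`. -/
abbrev Mat3 := Matrix (Fin 3) (Fin 3) ℂ

/-! ### Topology of the projective plane -/

lemma isOpenQuotientMap_mk' : IsOpenQuotientMap (mk' ℂ : {v : V3 // v ≠ 0} → P2) := by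
  have hq : IsQuotientMap (mk' ℂ : {v : V3 // v ≠ 0} → P2) := isQuotientMap_quot_mk
  refine ⟨hq.surjective, hq.continuous, fun U hU => ?_⟩
  rw [← hq.isOpen_preimage]
  have saturation : mk' ℂ ⁻¹' (mk' ℂ '' U) = ⋃ c : ℂˣ, (fun v : {v : V3 // v ≠ 0} =>
      (⟨(c : ℂ) • v.1, smul_ne_zero c.ne_zero v.2⟩ : {v : V3 // v ≠ 0})) ⁻¹' U := by
    ext v
    simp only [Set.mem_preimage, Set.mem_image, Set.mem_iUnion]
    constructor
    · rintro ⟨w, hw, h⟩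
      obtain ⟨c, hc⟩ := (mk_eq_mk_iff ℂ _ _ w.2 v.2).1 h
      exact ⟨c, by convert hw; exact hc⟩
    · rintro ⟨c, hc⟩
      exact ⟨_, hc, (mk_eq_mk_iff ℂ _ _ _ _).2 ⟨c, rfl⟩⟩
  rw [saturation]
  exact isOpen_iUnion fun c => hU.preimage (by fun_prop)

instance : T2Space P2 := by
  rw [t2Space_iff_of_isOpenQuotientMap isOpenQuotientMap_mk']
  simp only [mk'_eq_mk, mk_eq_mk_iff_crossProduct_eq_zero, cross_apply]
  refine isClosed_eq (continuous_pi fun i => ?_) continuous_const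
  have hcoord (j : Fin 3) : Continuous fun v : {v : V3 // v ≠ 0} => v.1 j :=
    (continuous_apply j).comp continuous_subtype_val
  fin_cases i <;> exact
    .sub (.mul ((hcoord _).comp continuous_fst) ((hcoord _).comp continuous_snd))
      (.mul ((hcoord _).comp continuous_fst) ((hcoord _).comp continuous_snd))

instance : CompactSpace P2 := by
  let f : Metric.sphere (0 : V3) 1 → {v : V3 // v ≠ 0} :=
    fun v => ⟨v.1, ne_zero_of_mem_unit_sphere v⟩
  have hsurj : Function.Surjective (mk' ℂ ∘ f : _ → P2) := by
    intro z
    have hn : ‖z.rep‖ ≠ 0 := norm_ne_zero_iff.2 z.rep_nonzero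
    refine ⟨⟨(‖z.rep‖ : ℂ)⁻¹ • z.rep, by simp [norm_smul, hn]⟩, ?_⟩
    conv_rhs => rw [← z.mk_rep]
    exact (mk_eq_mk_iff' ℂ _ _ _ z.rep_nonzero).2 ⟨_, rfl⟩
  have hf : Continuous (mk' ℂ ∘ f : _ → P2) :=
    isOpenQuotientMap_mk'.continuous.comp (by fun_prop)
  exact hsurj.compactSpace hf

instance : ContinuousConstSMul PSL3 P2 := ⟨continuous_pact⟩

/-- The projectivization of the kernel of a matrix. -/
def projKer (M : Mat3) : Set P2 := {z | M *ᵥ z.rep = 0}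

lemma mk_mem_projKer {M : Mat3} {v : V3} {hv : v ≠ 0} :
    (mk ℂ v hv : P2) ∈ projKer M ↔ M *ᵥ v = 0 := by
  obtain ⟨c, hc⟩ := exists_smul_eq_mk_rep ℂ v hv
  rw [projKer, Set.mem_ofPred_eq, ← hc, Units.smul_def, mulVec_smul,
    smul_eq_zero_iff_right c.ne_zero]

/-- The pseudo-projective map induced by a possibly singular matrix; the points of `projKer M`, at
which it is not defined, are given the junk value `z`. -/
def pseudoProj (M : Mat3) (z : P2) : P2 :=
  if h : M *ᵥ z.rep ≠ 0 then mk ℂ (M *ᵥ z.rep) h else z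

lemma pseudoProj_mk {M : Mat3} {v : V3} (hv : v ≠ 0) (h : M *ᵥ v ≠ 0) :
    pseudoProj M (mk ℂ v hv) = mk ℂ (M *ᵥ v) h := by
  have h' : M *ᵥ (mk ℂ v hv).rep ≠ 0 := mk_mem_projKer.not.2 h
  obtain ⟨c, hc⟩ := exists_smul_eq_mk_rep ℂ v hv
  rw [pseudoProj, dif_pos h', mk_eq_mk_iff]
  exact ⟨c, by rw [← hc, Units.smul_def, Units.smul_def, mulVec_smul]⟩

lemma isOpen_compl_projKer : IsOpen {q : Mat3 × P2 | q.2 ∉ projKer q.1} := by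
  rw [← (IsOpenQuotientMap.id.prodMap isOpenQuotientMap_mk').isQuotientMap.isOpen_preimage]
  have : Prod.map id (mk' ℂ) ⁻¹' {q : Mat3 × P2 | q.2 ∉ projKer q.1} =
      {q : Mat3 × {v : V3 // v ≠ 0} | q.1 *ᵥ q.2.1 ≠ 0} := by
    ext ⟨M, v⟩
    exact mk_mem_projKer.not
  rw [this]
  exact isOpen_ne_fun (by fun_prop) continuous_const

lemma continuousAt_pseudoProj {M : Mat3} {z : P2} (h : z ∉ projKer M) :
    ContinuousAt (fun q : Mat3 × P2 => pseudoProj q.1 q.2) (M, z) := by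
  induction z using Projectivization.ind with
  | h v hv =>
    have hq : IsOpenQuotientMap (Prod.map id (mk' ℂ) : Mat3 × {v : V3 // v ≠ 0} → Mat3 × P2) :=
      IsOpenQuotientMap.id.prodMap isOpenQuotientMap_mk'
    have hc : Continuous fun q : Mat3 × {v : V3 // v ≠ 0} => q.1 *ᵥ q.2.1 := by fun_prop
    have hU : IsOpen {q : Mat3 × {v : V3 // v ≠ 0} | q.1 *ᵥ q.2.1 ≠ 0} :=
      isOpen_ne_fun hc continuous_const
    have hM : (M, ⟨v, hv⟩) ∈ {q : Mat3 × {v : V3 // v ≠ 0} | q.1 *ᵥ q.2.1 ≠ 0} :=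
      mk_mem_projKer.not.1 h
    rw [show (M, mk ℂ v hv) = Prod.map id (mk' ℂ) (M, (⟨v, hv⟩ : {v : V3 // v ≠ 0})) from rfl,
      ← hq.continuousAt_comp_iff]
    refine ContinuousOn.continuousAt ?_ (hU.mem_nhds hM)
    rw [continuousOn_iff_continuous_domRestrict]
    refine (isOpenQuotientMap_mk'.continuous.comp
      ((hc.comp continuous_subtype_val).subtype_mk fun q => q.2)).congr fun q => ?_
    exact (pseudoProj_mk _ q.2).symm

lemma tendsto_pseudoProj {ι : Type*} {l : Filter ι} {M : ι → Mat3} {τ : Mat3} {x : ι → P2}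
    {z : P2} (hM : Tendsto M l (𝓝 τ)) (hx : Tendsto x l (𝓝 z)) (h : z ∉ projKer τ) :
    Tendsto (fun i => pseudoProj (M i) (x i)) l (𝓝 (pseudoProj τ z)) := by
  have := (continuousAt_pseudoProj h).tendsto.comp (hM.prodMk_nhds hx)
  exact this

lemma mulVec_ne_zero (A : SL3) {v : V3} (hv : v ≠ 0) : A.1 *ᵥ v ≠ 0 :=
  (SpecialLinearGroup.toLin' A).map_ne_zero_iff.2 hv

lemma mk_smul_mk (A : SL3) {v : V3} (hv : v ≠ 0) :
    (A : PSL3) • (mk ℂ v hv : P2) = mk ℂ (A.1 *ᵥ v) (mulVec_ne_zero A hv) := rfl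

lemma mk_smul_eq_pseudoProj (A : SL3) {c : ℂ} (hc : c ≠ 0) (z : P2) :
    (A : PSL3) • z = pseudoProj (c • A.1) z := by
  induction z using Projectivization.ind with
  | h v hv =>
    have h : (c • A.1) *ᵥ v ≠ 0 := by
      rw [smul_mulVec]
      exact smul_ne_zero hc (mulVec_ne_zero A hv)
    rw [pseudoProj_mk hv h, mk_smul_mk, eq_comm, mk_eq_mk_iff']
    exact ⟨c, (smul_mulVec _ _ _).symm⟩

/-! ### Limits of rescaled group elements -/

open scoped Matrix.Norms.Elementwise

/-- The closed cone of matrices spanned by the lifts of `Γ`. Its nonzero elements represent the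
elements of `Γ` and their pseudo-projective limits. -/
def limCone (Γ : Subgroup PSL3) : Set Mat3 :=
  closure {M | ∃ c : ℂ, ∃ A : SL3, (A : PSL3) ∈ Γ ∧ c • A.1 = M}

/-- The points at which every pseudo-projective limit of `Γ` is defined. -/
def regularSet (Γ : Subgroup PSL3) : Set P2 :=
  {z | ∀ τ ∈ limCone Γ, τ ≠ 0 → z ∉ projKer τ}

section LimCone

variable {Γ : Subgroup PSL3}

lemma smul_mem_limCone {τ : Mat3} (h : τ ∈ limCone Γ) (c : ℂ) : c • τ ∈ limCone Γ := by
  refine map_mem_closure (continuous_const_smul c) h ?_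
  rintro _ ⟨d, A, hA, rfl⟩
  exact ⟨c * d, A, hA, (smul_smul c d _).symm⟩

lemma mul_mem_limCone {τ : Mat3} (h : τ ∈ limCone Γ) {B : SL3} (hB : (B : PSL3) ∈ Γ) :
    τ * B.1 ∈ limCone Γ := by
  refine map_mem_closure (f := fun M : Mat3 => M * B.1) (by fun_prop) h ?_
  rintro _ ⟨d, A, hA, rfl⟩
  exact ⟨d, A * B, Γ.mul_mem hA hB, by simp⟩

lemma mem_regularSet_iff {z : P2} :
    z ∈ regularSet Γ ↔ ∀ τ ∈ limCone Γ ∩ Metric.sphere 0 1, z ∉ projKer τ := by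
  constructor
  · rintro h τ ⟨hτ, hτ1⟩
    exact h τ hτ (ne_zero_of_mem_unit_sphere ⟨τ, hτ1⟩)
  · intro h τ hτ h0 hz
    refine h ((‖τ‖ : ℂ)⁻¹ • τ) ⟨smul_mem_limCone hτ _, by simp [norm_smul, h0]⟩ ?_
    rw [projKer, Set.mem_ofPred_eq, smul_mulVec, show τ *ᵥ z.rep = 0 from hz, smul_zero]

lemma isCompact_limCone_inter_sphere : IsCompact (limCone Γ ∩ Metric.sphere (0 : Mat3) 1) :=
  (isCompact_sphere 0 1).inter_left isClosed_closure

lemma isOpen_regularSet : IsOpen (regularSet Γ) := by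
  refine isOpen_iff_mem_nhds.2 fun z hz => ?_
  have h : ∀ᶠ z' in 𝓝 z, ∀ τ ∈ limCone Γ ∩ Metric.sphere 0 1, z' ∉ projKer τ :=
    isCompact_limCone_inter_sphere.eventually_forall_of_forall_eventually fun τ hτ =>
      (isOpen_compl_projKer.preimage continuous_swap).mem_nhds (mem_regularSet_iff.1 hz τ hτ)
  filter_upwards [h] with z' hz'
  exact mem_regularSet_iff.2 hz'

lemma smul_set_eq_of_forall_smul_mem {s : Set P2} (h : ∀ γ ∈ Γ, ∀ z ∈ s, γ • z ∈ s) {γ : PSL3}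
    (hγ : γ ∈ Γ) : γ • s = s :=
  (Set.smul_set_subset_iff.2 (h γ hγ)).antisymm fun z hz =>
    Set.mem_smul_set_iff_inv_smul_mem.2 (h _ (Γ.inv_mem hγ) z hz)

lemma smul_mem_regularSet {γ : PSL3} (hγ : γ ∈ Γ) {z : P2} (hz : z ∈ regularSet Γ) :
    γ • z ∈ regularSet Γ := by
  obtain ⟨B, rfl⟩ := QuotientGroup.mk_surjective γ
  induction z using Projectivization.ind with
  | h v hv =>
    intro τ hτ h0
    have hτB : τ * B.1 ≠ 0 := by
      rintro h
      apply h0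
      have hB : B.1 * B⁻¹.1 = 1 := congrArg Subtype.val (mul_inv_cancel B)
      rw [← mul_one τ, ← hB, ← mul_assoc, h, zero_mul]
    have h := hz (τ * B.1) (mul_mem_limCone hτ hγ) hτB
    rw [mk_mem_projKer, ← mulVec_mulVec] at h
    rwa [mk_smul_mk, mk_mem_projKer]

lemma smul_regularSet {γ : PSL3} (hγ : γ ∈ Γ) : γ • regularSet Γ = regularSet Γ :=
  smul_set_eq_of_forall_smul_mem (fun _ hγ _ hz => smul_mem_regularSet hγ hz) hγ

end LimCone

/-! ### Discreteness -/

instance : IsTopologicalGroup SL3 := SpecialLinearGroup.topologicalGroup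

instance : IsClosed (Subgroup.center SL3 : Set SL3) := by
  have : T2Space SL3 := SpecialLinearGroup.isClosedEmbedding_val.isEmbedding.t2Space
  rw [Subgroup.coe_center, ← Set.centralizer_univ]
  exact Set.isClosed_centralizer _

/-- The filter on `SL(3,ℂ)` along which the induced elements of `PSL(3,ℂ)` lie in `Γ` and leave
every finite set. -/
def divergence (Γ : Subgroup PSL3) : Filter SL3 :=
  comap (QuotientGroup.mk : SL3 → PSL3) (cofinite ⊓ 𝓟 Γ)

/-- The points `a` and `b` are dynamically related under `Γ`: there are pairwise distinct elements
of `Γ` carrying points arbitrarily close to `a` to points arbitrarily close to `b`. -/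
def DynRel (Γ : Subgroup PSL3) (a b : P2) : Prop :=
  MapClusterPt (a, b) (comap Prod.fst (divergence Γ)) fun p : SL3 × P2 =>
    (p.2, (p.1 : PSL3) • p.2)

section Dynamics

variable {Γ : Subgroup PSL3}

lemma eventually_mem_divergence : ∀ᶠ A : SL3 in divergence Γ, (A : PSL3) ∈ Γ :=
  tendsto_comap.eventually (eventually_inf_principal.2 (.of_forall fun _ => id))

lemma tendsto_inv_divergence : Tendsto (·⁻¹) (divergence Γ) (divergence Γ) := by
  have hinv : Tendsto (·⁻¹) (cofinite ⊓ 𝓟 (Γ : Set PSL3)) (cofinite ⊓ 𝓟 Γ) :=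
    inv_injective.tendsto_cofinite.inf (tendsto_principal_principal.2 fun _ => Γ.inv_mem)
  exact tendsto_comap_iff.2 (hinv.comp tendsto_comap)

lemma frequently_divergence_iff {P : PSL3 → Prop} :
    (∃ᶠ A : SL3 in divergence Γ, P A) ↔ {γ : PSL3 | γ ∈ Γ ∧ P γ}.Infinite := by
  rw [divergence, frequently_comap, frequently_inf_principal, frequently_cofinite_iff_infinite]
  refine iff_of_eq (congrArg Set.Infinite (Set.ext fun γ => and_congr_right fun _ => ?_))
  constructor
  · rintro ⟨A, rfl, hA⟩
    exact hA
  · obtain ⟨A, rfl⟩ := QuotientGroup.mk_surjective γ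
    exact fun hA => ⟨A, rfl, hA⟩

lemma frequently_comap_fst_divergence_iff {s t : Set P2} :
    (∃ᶠ p : SL3 × P2 in comap Prod.fst (divergence Γ), (p.2, (p.1 : PSL3) • p.2) ∈ s ×ˢ t) ↔
      {γ : PSL3 | γ ∈ Γ ∧ (γ • s ∩ t).Nonempty}.Infinite := by
  rw [frequently_comap, ← frequently_divergence_iff]
  refine frequently_congr (.of_forall fun A => ?_)
  constructor
  · rintro ⟨⟨A, x⟩, rfl, hx, hy⟩
    exact ⟨_, Set.smul_mem_smul_set hx, hy⟩
  · rintro ⟨_, ⟨x, hx, rfl⟩, hy⟩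
    exact ⟨(A, x), rfl, hx, hy⟩

lemma dynRel_iff {a b : P2} : DynRel Γ a b ↔
    ∀ s ∈ 𝓝 a, ∀ t ∈ 𝓝 b, {γ : PSL3 | γ ∈ Γ ∧ (γ • s ∩ t).Nonempty}.Infinite := by
  rw [DynRel, ((𝓝 a).basis_sets.prod_nhds (𝓝 b).basis_sets).mapClusterPt_iff_frequently]
  simp only [frequently_comap_fst_divergence_iff, Prod.forall, and_imp, id]
  exact ⟨fun h s hs t ht => h s t hs ht, fun h s t hs ht => h s hs t ht⟩

lemma exists_dynRel {K K' : Set P2} (hK : IsCompact K) (hK' : IsCompact K')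
    (h : {γ : PSL3 | γ ∈ Γ ∧ (γ • K ∩ K').Nonempty}.Infinite) :
    ∃ a ∈ K, ∃ b ∈ K', DynRel Γ a b := by
  obtain ⟨⟨a, b⟩, ⟨ha, hb⟩, hab⟩ :=
    (hK.prod hK').exists_mapClusterPt_of_frequently (frequently_comap_fst_divergence_iff.2 h)
  exact ⟨a, ha, b, hb, hab⟩

lemma DynRel.symm {a b : P2} (h : DynRel Γ a b) : DynRel Γ b a := by
  refine dynRel_iff.2 fun t ht s hs => ?_
  refine ((dynRel_iff.1 h s hs t ht).image inv_injective.injOn).mono ?_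
  rintro _ ⟨γ, ⟨hγ, y, hys, hyt⟩, rfl⟩
  exact ⟨Γ.inv_mem hγ, γ⁻¹ • y, Set.smul_mem_smul_set hyt, Set.mem_smul_set_iff_inv_smul_mem.1 hys⟩

lemma dynRel_self {z : P2} (h : {γ : PSL3 | γ ∈ Γ ∧ γ • z = z}.Infinite) : DynRel Γ z z := by
  refine dynRel_iff.2 fun s hs t ht => h.mono ?_
  rintro γ ⟨hγ, hz⟩
  exact ⟨hγ, z, ⟨z, mem_of_mem_nhds hs, hz⟩, mem_of_mem_nhds ht⟩

lemma norm_ne_zero (A : SL3) : ‖A.1‖ ≠ 0 := by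
  refine norm_ne_zero_iff.2 fun h => ?_
  have hdet := A.2
  simp [h] at hdet

/-- The lift `A` rescaled to norm one. -/
def normalizedLift (A : SL3) : Mat3 := (‖A.1‖ : ℂ)⁻¹ • A.1

lemma smul_eq_pseudoProj_normalizedLift (A : SL3) (z : P2) :
    (A : PSL3) • z = pseudoProj (normalizedLift A) z :=
  mk_smul_eq_pseudoProj A (inv_ne_zero (Complex.ofReal_ne_zero.2 (norm_ne_zero A))) z

lemma normalizedLift_mem {A : SL3} (hA : (A : PSL3) ∈ Γ) :
    normalizedLift A ∈ limCone Γ ∩ Metric.sphere 0 1 := by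
  refine ⟨subset_closure ⟨_, A, hA, rfl⟩, ?_⟩
  rw [mem_sphere_zero_iff_norm, normalizedLift, norm_smul, norm_inv, Complex.norm_real, norm_norm,
    inv_mul_cancel₀ (norm_ne_zero A)]

lemma exists_tendsto_normalizedLift {U : Ultrafilter SL3} (hU : ↑U ≤ divergence Γ) :
    ∃ τ ∈ limCone Γ, τ ≠ 0 ∧ Tendsto normalizedLift U (𝓝 τ) := by
  obtain ⟨τ, ⟨hτ, hτ1⟩, hlim⟩ := isCompact_limCone_inter_sphere.ultrafilter_le_nhds
    (U.map normalizedLift)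
    (tendsto_principal.2 (hU (eventually_mem_divergence.mono fun _ => normalizedLift_mem)))
  exact ⟨τ, hτ, ne_zero_of_mem_unit_sphere ⟨τ, hτ1⟩, hlim⟩

section Discrete

variable [DiscreteTopology Γ]

lemma finite_norm_le (R : ℝ) :
    ((QuotientGroup.mk : SL3 → PSL3) '' {A | A.1 ∈ Metric.closedBall 0 R} ∩ Γ).Finite := by
  have hK : IsCompact ((QuotientGroup.mk : SL3 → PSL3) '' {A | A.1 ∈ Metric.closedBall 0 R}) :=
    (SpecialLinearGroup.isClosedEmbedding_val.isCompact_preimage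
      (isCompact_closedBall 0 R)).image continuous_quot_mk
  exact (hK.inter_right (Subgroup.isClosed_of_discrete (H := Γ))).finite
    (.mono (isDiscrete_iff_discreteTopology.2 ‹_›) Set.inter_subset_right)

lemma tendsto_norm_divergence : Tendsto (fun A : SL3 => ‖A.1‖) (divergence Γ) atTop := by
  refine tendsto_atTop.2 fun R => ?_
  have hfar := inf_le_left (b := 𝓟 (Γ : Set PSL3)) (finite_norm_le (Γ := Γ) R).compl_mem_cofinite
  filter_upwards [eventually_mem_divergence, tendsto_comap.eventually hfar] with A hA hAR
  by_contra! h
  exact hAR ⟨⟨A, mem_closedBall_zero_iff.2 h.le, rfl⟩, hA⟩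

lemma tendsto_normalizedLift_mul_inv :
    Tendsto (fun A : SL3 => normalizedLift A * normalizedLift A⁻¹) (divergence Γ) (𝓝 0) := by
  have hA := (tendsto_norm_divergence (Γ := Γ)).inv_tendsto_atTop
  have h := (Complex.continuous_ofReal.tendsto _).comp (hA.mul (hA.comp tendsto_inv_divergence))
    |>.smul_const (1 : Mat3)
  rw [mul_zero, Complex.ofReal_zero, zero_smul] at h
  refine h.congr fun A => ?_
  have hinv : A.1 * A⁻¹.1 = 1 := congrArg Subtype.val (mul_inv_cancel A)
  rw [normalizedLift, normalizedLift, smul_mul_smul_comm, hinv]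
  simp

lemma DynRel.exists_limits {a b : P2} (h : DynRel Γ a b) (hb : b ∈ regularSet Γ) :
    ∃ U : Ultrafilter SL3, ↑U ≤ divergence Γ ∧ ∃ τ ∈ limCone Γ, τ ≠ 0 ∧ ∃ σ ∈ limCone Γ, σ ≠ 0 ∧
      τ * σ = 0 ∧ Tendsto (fun A => normalizedLift A⁻¹) U (𝓝 σ) ∧ pseudoProj σ b = a := by
  obtain ⟨W, hW, hlim⟩ := mapClusterPt_iff_ultrafilter.1 h
  have hU : ↑(W.map Prod.fst) ≤ divergence Γ := tendsto_iff_comap.2 hW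
  have hU' : ↑((W.map Prod.fst).map (·⁻¹)) ≤ divergence Γ := tendsto_inv_divergence.mono_left hU
  obtain ⟨τ, hτ, hτ0, hAτ⟩ := exists_tendsto_normalizedLift hU
  obtain ⟨σ, hσ, hσ0, hAσ⟩ := exists_tendsto_normalizedLift hU'
  refine ⟨_, hU, τ, hτ, hτ0, σ, hσ, hσ0, ?_, hAσ, ?_⟩
  · exact tendsto_nhds_unique (hAτ.mul hAσ) (tendsto_normalizedLift_mul_inv.mono_left hU)
  · have hσb := tendsto_pseudoProj (l := (W : Filter (SL3 × P2))) hAσ hlim.snd_nhds (hb σ hσ hσ0)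
    refine tendsto_nhds_unique (hσb.congr fun p => ?_) hlim.fst_nhds
    rw [← smul_eq_pseudoProj_normalizedLift]
    exact inv_smul_smul (p.1 : PSL3) p.2

lemma DynRel.notMem_regularSet {a b : P2} (h : DynRel Γ a b) (hb : b ∈ regularSet Γ) :
    a ∉ regularSet Γ := by
  obtain ⟨-, -, τ, hτ, hτ0, σ, hσ, hσ0, hmul, -, rfl⟩ := h.exists_limits hb
  intro ha
  induction b using Projectivization.ind with
  | h v hv =>
    have hσv : σ *ᵥ v ≠ 0 := mk_mem_projKer.not.1 (hb σ hσ hσ0)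
    have hτσ := ha τ hτ hτ0
    rw [pseudoProj_mk hv hσv, mk_mem_projKer, mulVec_mulVec, hmul, zero_mulVec] at hτσ
    exact hτσ rfl

lemma DynRel.mem_orbitCluster {a b : P2} (h : DynRel Γ a b) (hb : b ∈ regularSet Γ) :
    a ∈ orbitCluster Γ b := by
  obtain ⟨U, hU, -, -, -, σ, hσ, hσ0, -, hlim, rfl⟩ := h.exists_limits hb
  intro V hV
  have hσb := tendsto_pseudoProj hlim (tendsto_const_nhds (x := b)) (hb σ hσ hσ0)
  have hV' : ∀ᶠ A : SL3 in U, (↑A⁻¹ : PSL3) • b ∈ V :=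
    (hσb.eventually hV).mono fun A hA => by rwa [smul_eq_pseudoProj_normalizedLift]
  exact frequently_divergence_iff.1 ((tendsto_inv_divergence.mono_left hU).frequently
    hV'.frequently)

end Discrete
end Dynamics

/-! ### The regular set and the discontinuity regions -/

section Regions

variable {Γ : Subgroup PSL3} {Ω : Set P2}

lemma not_dynRel_iff_finite (hΩ : IsOpen Ω) :
    (∀ a ∈ Ω, ∀ b ∈ Ω, ¬DynRel Γ a b) ↔ ∀ K : Set P2, K ⊆ Ω → IsCompact K →
      {γ : PSL3 | γ ∈ Γ ∧ (γ • K ∩ K).Nonempty}.Finite := by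
  constructor
  · intro h K hKΩ hK
    by_contra hinf
    obtain ⟨a, ha, b, hb, hab⟩ := exists_dynRel hK hK hinf
    exact h a (hKΩ ha) b (hKΩ hb) hab
  · intro h a ha b hb hab
    obtain ⟨K, hK, haK, hKΩ⟩ := exists_compact_subset hΩ ha
    obtain ⟨K', hK', hbK, hKΩ'⟩ := exists_compact_subset hΩ hb
    refine dynRel_iff.1 hab K (mem_interior_iff_mem_nhds.1 haK) K' (mem_interior_iff_mem_nhds.1 hbK)
      ((h (K ∪ K') (Set.union_subset hKΩ hKΩ') (hK.union hK')).subset ?_)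
    rintro γ ⟨hγ, hne⟩
    exact ⟨hγ, hne.mono (Set.inter_subset_inter
      (Set.smul_set_mono Set.subset_union_left) Set.subset_union_right)⟩

lemma notMem_orbitCluster (hΩ : IsOpen Ω) (h : ∀ a ∈ Ω, ∀ b ∈ Ω, ¬DynRel Γ a b) {w : P2}
    (hw : w ∈ Ω) (y : P2) : w ∉ orbitCluster Γ y := by
  intro hcl
  obtain ⟨K, hK, hwK, hKΩ⟩ := exists_compact_subset hΩ hw
  have hinf := hcl K (mem_interior_iff_mem_nhds.1 hwK)
  obtain ⟨g, hg, hgK⟩ := hinf.nonempty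
  refine (hinf.image (mul_left_injective g⁻¹).injOn)
    (((not_dynRel_iff_finite hΩ).1 h K hKΩ hK).subset ?_)
  rintro _ ⟨γ, ⟨hγ, hγK⟩, rfl⟩
  refine ⟨Γ.mul_mem hγ (Γ.inv_mem hg), γ • y, ⟨g • y, hgK, ?_⟩, hγK⟩
  exact (smul_smul _ _ _).trans (congrArg (· • y) (inv_mul_cancel_right γ g))

section Discrete

variable [DiscreteTopology Γ]

lemma disjoint_regularSet_L0 : Disjoint (regularSet Γ) (L0 Γ) :=
  Disjoint.closure_right (Set.disjoint_left.2 fun _ hz hinf =>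
    (dynRel_self hinf).notMem_regularSet hz hz) isOpen_regularSet

lemma disjoint_regularSet_L1 : Disjoint (regularSet Γ) (L1 Γ) := by
  refine Disjoint.closure_right (Set.disjoint_left.2 fun w hw hcl => ?_) isOpen_regularSet
  obtain ⟨y, -, hy⟩ := Set.mem_iUnion₂.1 hcl
  exact notMem_orbitCluster isOpen_regularSet
    (fun a ha b hb hab => hab.notMem_regularSet hb ha) hw y hy

lemma disjoint_regularSet_L2 : Disjoint (regularSet Γ) (L2 Γ) := by
  refine Disjoint.closure_right (Set.disjoint_left.2 fun w hw hcl => ?_) isOpen_regularSet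
  obtain ⟨K, ⟨hK, hKL⟩, hcl⟩ := Set.mem_iUnion₂.1 hcl
  obtain ⟨K', hK', hwK', hreg⟩ := exists_compact_subset isOpen_regularSet hw
  obtain ⟨a, ha, b, hb, hab⟩ := exists_dynRel hK hK' (hcl K' (mem_interior_iff_mem_nhds.1 hwK'))
  have hbL0 : b ∈ (L0 Γ)ᶜ := Set.disjoint_left.1 disjoint_regularSet_L0 (hreg hb)
  exact hKL ha (Or.inr (subset_closure
    (Set.mem_iUnion₂.2 ⟨b, hbL0, hab.mem_orbitCluster (hreg hb)⟩)))

lemma regularSet_subset_kulkarniRegion : regularSet Γ ⊆ kulkarniRegion Γ :=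
  Set.disjoint_left.1 ((disjoint_regularSet_L0.union_right disjoint_regularSet_L1).union_right
    disjoint_regularSet_L2)

lemma ActsPropDiscOn.union_regularSet (h : ActsPropDiscOn Γ Ω) :
    ActsPropDiscOn Γ (Ω ∪ regularSet Γ) := by
  obtain ⟨hne, hopen, hinv, hpd⟩ := h
  replace hpd := (not_dynRel_iff_finite hopen).2 hpd
  have hopen' := hopen.union (isOpen_regularSet (Γ := Γ))
  refine ⟨hne.mono Set.subset_union_left, hopen', fun γ hγ => ?_, ?_⟩
  · rw [Set.image_union, hinv γ hγ]
    exact congrArg (Ω ∪ ·) (smul_regularSet hγ)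
  · refine (not_dynRel_iff_finite hopen').1 ?_
    have notRegular : ∀ a ∈ Ω ∪ regularSet Γ, ∀ b ∈ regularSet Γ, ¬DynRel Γ a b := by
      rintro a (ha | ha) b hb hab
      · exact notMem_orbitCluster hopen hpd ha b (hab.mem_orbitCluster hb)
      · exact hab.notMem_regularSet hb ha
    rintro a ha b (hb | hb) hab
    · rcases ha with ha | ha
      · exact hpd a ha b hb hab
      · exact notRegular b (Or.inl hb) a ha hab.symm
    · exact notRegular a ha b hb hab

end Discrete

lemma regularSet_subset_eqSet : regularSet Γ ⊆ eqSet Γ := by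
  intro z hz
  refine ⟨regularSet Γ, isOpen_regularSet, hz, ?_⟩
  let T : Set Mat3 := limCone Γ ∩ Metric.sphere 0 1
  have : CompactSpace T := isCompact_iff_compactSpace.1 isCompact_limCone_inter_sphere
  have hcont : Continuous fun q : T × regularSet Γ => pseudoProj q.1.1 q.2.1 := by
    refine continuous_iff_continuousAt.2 fun ⟨τ, w⟩ => ?_
    exact tendsto_pseudoProj (continuous_subtype_val.comp continuous_fst).continuousAt
      (continuous_subtype_val.comp continuous_snd).continuousAt (mem_regularSet_iff.1 w.2 τ.1 τ.2)
  let F : C(T, C(regularSet Γ, P2)) := ContinuousMap.curry ⟨_, hcont⟩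
  have hF : IsCompact (Set.range F) := isCompact_range F.continuous
  refine hF.of_isClosed_subset isClosed_closure (closure_minimal ?_ hF.isClosed)
  rintro f ⟨γ, hγ, rfl⟩
  obtain ⟨A, rfl⟩ := QuotientGroup.mk_surjective γ
  exact ⟨⟨normalizedLift A, normalizedLift_mem hγ⟩,
    ContinuousMap.ext fun w => (smul_eq_pseudoProj_normalizedLift A w.1).symm⟩

lemma regularSet_subset [DiscreteTopology Γ]
    (hΩ : Ω = eqSet Γ ∨ Ω = kulkarniRegion Γ ∨ MaxDisc Γ Ω) : regularSet Γ ⊆ Ω := by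
  rcases hΩ with rfl | rfl | h
  · exact regularSet_subset_eqSet
  · exact regularSet_subset_kulkarniRegion
  · exact Set.union_eq_left.1 (h.2 _ h.1.union_regularSet Set.subset_union_left)

lemma orbitCluster_eq_setCluster_singleton (z : P2) :
    orbitCluster Γ z = setCluster Γ {z} := by
  simp [orbitCluster, setCluster]

lemma smul_mem_setCluster {K : Set P2} {γ : PSL3} (hγ : γ ∈ Γ) {w : P2}
    (hw : w ∈ setCluster Γ K) : γ • w ∈ setCluster Γ K := by
  intro U hU
  have hinf := hw _ ((continuous_const_smul γ).continuousAt.preimage_mem_nhds hU)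
  refine (hinf.image (mul_right_injective γ).injOn).mono ?_
  rintro _ ⟨δ, ⟨hδ, _, ⟨x, hx, rfl⟩, hxU⟩, rfl⟩
  exact ⟨Γ.mul_mem hγ hδ, γ • δ • x, ⟨x, hx, mul_smul γ δ x⟩, hxU⟩

lemma smul_mem_L0 {γ : PSL3} (hγ : γ ∈ Γ) {z : P2} (hz : z ∈ L0 Γ) : γ • z ∈ L0 Γ := by
  refine map_mem_closure (continuous_const_smul γ) hz fun z (hz : Set.Infinite _) => ?_
  refine (hz.image (MulAut.conj γ).injective.injOn).mono ?_
  rintro _ ⟨δ, ⟨hδ, hδz : δ • z = z⟩, rfl⟩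
  refine ⟨Γ.mul_mem (Γ.mul_mem hγ hδ) (Γ.inv_mem hγ), ?_⟩
  change (γ * δ * γ⁻¹) • γ • z = γ • z
  rw [mul_smul, inv_smul_smul, mul_smul, hδz]

lemma smul_mem_kulkarniLimit {γ : PSL3} (hγ : γ ∈ Γ) {z : P2} (hz : z ∈ kulkarniLimit Γ) :
    γ • z ∈ kulkarniLimit Γ := by
  rcases hz with (hz | hz) | hz
  · exact Or.inl (Or.inl (smul_mem_L0 hγ hz))
  · refine Or.inl (Or.inr (map_mem_closure (continuous_const_smul γ) hz fun w hw => ?_))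
    simp only [Set.mem_iUnion, orbitCluster_eq_setCluster_singleton] at hw ⊢
    exact hw.imp fun y => Exists.imp fun _ => smul_mem_setCluster hγ
  · refine Or.inr (map_mem_closure (continuous_const_smul γ) hz fun w hw => ?_)
    simp only [Set.mem_iUnion] at hw ⊢
    exact hw.imp fun y => Exists.imp fun _ => smul_mem_setCluster hγ

lemma smul_mem_eqSet {γ : PSL3} (hγ : γ ∈ Γ) {z : P2} (hz : z ∈ eqSet Γ) : γ • z ∈ eqSet Γ := by
  obtain ⟨U, hU, hzU, hc⟩ := hz
  refine ⟨(γ⁻¹ • ·) ⁻¹' U, hU.preimage (continuous_const_smul _), ?_, ?_⟩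
  · rwa [Set.mem_preimage, inv_smul_smul]
  · let e : C(((γ⁻¹ • ·) ⁻¹' U : Set P2), U) :=
      ⟨fun w => ⟨γ⁻¹ • w.1, w.2⟩, by fun_prop⟩
    have himg := hc.image (ContinuousMap.continuous_precomp e)
    refine himg.of_isClosed_subset isClosed_closure (closure_minimal ?_ himg.isClosed)
    rintro f ⟨δ, hδ, rfl⟩
    refine ⟨(pactCM (δ * γ)).restrict U, subset_closure ⟨_, Γ.mul_mem hδ hγ, rfl⟩, ?_⟩
    ext w
    change (δ * γ) • γ⁻¹ • w.1 = δ • w.1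
    rw [mul_smul, smul_inv_smul]

lemma smul_region_eq (hΩ : Ω = eqSet Γ ∨ Ω = kulkarniRegion Γ ∨ MaxDisc Γ Ω) {γ : PSL3}
    (hγ : γ ∈ Γ) : γ • Ω = Ω := by
  rcases hΩ with rfl | rfl | h
  · exact smul_set_eq_of_forall_smul_mem (fun _ hγ _ => smul_mem_eqSet hγ) hγ
  · rw [kulkarniRegion, Set.smul_set_compl,
      smul_set_eq_of_forall_smul_mem (fun _ hγ _ => smul_mem_kulkarniLimit hγ) hγ]
  · exact h.1.2.2.1 γ hγ

end Regions

/-! ### Subgroups of finite index -/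

lemma regularSet_subset_of_relIndex_ne_zero {H Γ : Subgroup PSL3} (h : H.relIndex Γ ≠ 0) :
    regularSet H ⊆ regularSet Γ := by
  have : (H.subgroupOf Γ).FiniteIndex := ⟨h⟩
  choose B hB using fun q : Γ ⧸ H.subgroupOf Γ => QuotientGroup.mk_surjective q.out.1
  have hcover : limCone Γ ⊆ ⋃ q, {τ | (B q)⁻¹.1 * τ ∈ limCone H} := by
    refine closure_minimal ?_ (isClosed_iUnion_of_finite fun q =>
      isClosed_closure.preimage (by fun_prop : Continuous fun τ : Mat3 => (B q)⁻¹.1 * τ))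
    rintro _ ⟨c, A, hA, rfl⟩
    obtain ⟨k, hk⟩ := QuotientGroup.mk_out_eq_mul (H.subgroupOf Γ) ⟨(A : PSL3), hA⟩
    refine Set.mem_iUnion.2 ⟨QuotientGroup.mk ⟨A, hA⟩, subset_closure
      ⟨c, (B (QuotientGroup.mk ⟨A, hA⟩))⁻¹ * A, ?_, (mul_smul_comm c _ A.1).symm⟩⟩
    rw [QuotientGroup.mk_mul, QuotientGroup.mk_inv, hB, hk, Subgroup.coe_mul, _root_.mul_inv_rev,
      inv_mul_cancel_right]
    exact H.inv_mem k.2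
  intro z hz τ hτ hne hzτ
  obtain ⟨q, hq⟩ := Set.mem_iUnion.1 (hcover hτ)
  have hcancel : (B q).1 * ((B q)⁻¹.1 * τ) = τ := by
    have hinv : (B q).1 * (B q)⁻¹.1 = 1 := congrArg Subtype.val (mul_inv_cancel (B q))
    rw [← mul_assoc, hinv, one_mul]
  refine hz _ hq (fun h0 => hne ?_) ?_
  · rw [← hcancel, h0, mul_zero]
  · rw [projKer, Set.mem_ofPred_eq, ← mulVec_mulVec, hzτ, mulVec_zero]

lemma relIndex_fixingSubgroup_ne_zero {G α : Type*} [Group G] [MulAction G α] {Γ : Subgroup G}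
    {F : Set α} (hF : F.Finite) (hΓ : ∀ γ ∈ Γ, ∀ s ∈ F, γ • s ∈ F) :
    (fixingSubgroup G F).relIndex Γ ≠ 0 := by
  have : Finite F := hF
  have hfix : fixingSubgroup G F = ⨅ s : F, MulAction.stabilizer G s.1 := by
    ext g
    simp [mem_fixingSubgroup_iff, Subgroup.mem_iInf]
  rw [hfix]
  refine Subgroup.relIndex_iInf_ne_zero fun s => ?_
  have hstab : (MulAction.stabilizer G s.1).subgroupOf Γ = MulAction.stabilizer Γ s.1 := rfl
  rw [Subgroup.relIndex, hstab, MulAction.index_stabilizer]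
  refine Set.ncard_ne_zero_of_mem (MulAction.mem_orbit_self s.1) (hF.subset ?_)
  rintro _ ⟨γ, rfl⟩
  exact hΓ γ γ.2 s s.2

/-! ### Incidence geometry -/

/-- The line of `ℙ²` dual to the point `p`, formed by the points orthogonal to `p` for the bilinear
dot product. -/
def polar (p : P2) : Set P2 := {z | z.orthogonal p}

lemma mem_polar_iff {p z : P2} : z ∈ polar p ↔ z.rep ⬝ᵥ p.rep = 0 := by
  rw [polar, Set.mem_ofPred_eq, ← orthogonal_mk z.rep_nonzero p.rep_nonzero, mk_rep, mk_rep]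

lemma mk_mem_polar_mk {v w : V3} {hv : v ≠ 0} {hw : w ≠ 0} :
    mk ℂ v hv ∈ polar (mk ℂ w hw) ↔ v ⬝ᵥ w = 0 := orthogonal_mk hv hw

lemma mk_submodule_le_iff {v : V3} {hv : v ≠ 0} {W : Submodule ℂ V3} :
    (mk ℂ v hv : P2).submodule ≤ W ↔ v ∈ W := by
  rw [submodule_mk, Submodule.span_singleton_le_iff_mem]

lemma polar_mk {w : V3} (hw : w ≠ 0) :
    polar (mk ℂ w hw) = {p : P2 | p.submodule ≤ (dotProductEquiv ℂ (Fin 3) w).ker} := by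
  ext z
  induction z using Projectivization.ind with
  | h v hv =>
    rw [mk_mem_polar_mk, Set.mem_ofPred_eq, mk_submodule_le_iff, LinearMap.mem_ker,
      dotProductEquiv_apply_apply, dotProduct_comm]

lemma finrank_ker_dotProductEquiv {w : V3} (hw : w ≠ 0) :
    Module.finrank ℂ (dotProductEquiv ℂ (Fin 3) w).ker = 2 := by
  have h := Module.Dual.finrank_ker_add_one_of_ne_zero
    ((dotProductEquiv ℂ (Fin 3)).map_ne_zero_iff.2 hw)
  simpa using h

lemma isLine_polar (p : P2) : IsLine (polar p) := by
  induction p using Projectivization.ind with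
  | h w hw => exact ⟨_, finrank_ker_dotProductEquiv hw, polar_mk hw⟩

lemma exists_polar_eq {ℓ : Set P2} (hℓ : IsLine ℓ) : ∃ p, polar p = ℓ := by
  obtain ⟨W, hW, rfl⟩ := hℓ
  have hlt : W < ⊤ := lt_top_iff_ne_top.2 fun h => by
    rw [h, finrank_top, Module.finrank_fin_fun] at hW
    norm_num at hW
  obtain ⟨f, hf, hWf⟩ := Submodule.exists_le_ker_of_lt_top W hlt
  obtain ⟨w, rfl⟩ := (dotProductEquiv ℂ (Fin 3)).surjective f
  have hw : w ≠ 0 := (dotProductEquiv ℂ (Fin 3)).map_ne_zero_iff.1 hf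
  refine ⟨mk ℂ w hw, ?_⟩
  rw [polar_mk, Submodule.eq_of_le_of_finrank_eq hWf
    (by rw [hW, finrank_ker_dotProductEquiv hw])]

lemma isLine_unique {ℓ m : Set P2} (hℓ : IsLine ℓ) (hm : IsLine m) {x y : P2} (hxy : x ≠ y)
    (hxℓ : x ∈ ℓ) (hyℓ : y ∈ ℓ) (hxm : x ∈ m) (hym : y ∈ m) : ℓ = m := by
  obtain ⟨p, rfl⟩ := exists_polar_eq hℓ
  obtain ⟨q, rfl⟩ := exists_polar_eq hm
  rw [(Configuration.ofField.eq_or_eq_of_orthogonal hxℓ hyℓ hxm hym).resolve_left hxy]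

lemma exists_polar_inter_polar_eq {p q : P2} (h : p ≠ q) : ∃ x, polar p ∩ polar q = {x} := by
  refine ⟨cross p q, Set.eq_singleton_iff_unique_mem.2
    ⟨⟨cross_orthogonal_left h, cross_orthogonal_right h⟩, fun x hx => ?_⟩⟩
  exact (Configuration.ofField.eq_or_eq_of_orthogonal hx.1 (cross_orthogonal_left h) hx.2
    (cross_orthogonal_right h)).resolve_right h

lemma exists_inter_eq_singleton {ℓ m : Set P2} (hℓ : IsLine ℓ) (hm : IsLine m) (h : ℓ ≠ m) :
    ∃ x, ℓ ∩ m = {x} := by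
  obtain ⟨p, rfl⟩ := exists_polar_eq hℓ
  obtain ⟨q, rfl⟩ := exists_polar_eq hm
  exact exists_polar_inter_polar_eq fun hpq => h (hpq ▸ rfl)

lemma smul_polar_mk (A : SL3) {w : V3} (hw : w ≠ 0) :
    (A : PSL3) • polar (mk ℂ w hw) = polar (mk ℂ (A⁻¹.transpose.1 *ᵥ w) (mulVec_ne_zero _ hw)) := by
  ext z
  induction z using Projectivization.ind with
  | h v hv =>
    rw [Set.mem_smul_set_iff_inv_smul_mem, ← QuotientGroup.mk_inv, mk_smul_mk, mk_mem_polar_mk,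
      mk_mem_polar_mk, SpecialLinearGroup.coe_transpose, mulVec_transpose, dotProduct_comm,
      dotProduct_mulVec, dotProduct_comm]

lemma isLine_smul {ℓ : Set P2} (hℓ : IsLine ℓ) (γ : PSL3) : IsLine (γ • ℓ) := by
  obtain ⟨p, rfl⟩ := exists_polar_eq hℓ
  obtain ⟨A, rfl⟩ := QuotientGroup.mk_surjective γ
  induction p using Projectivization.ind with
  | h w hw =>
    rw [smul_polar_mk]
    exact isLine_polar _

lemma encard_linesIn_le {ι : Type*} [Finite ι] [Nonempty ι] {X : Set P2} {p : ι → P2}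
    (hX : X ⊆ ⋃ i, polar (p i)) : (linesIn X).encard ≤ ENat.card ι := by
  suffices linesIn X ⊆ (polar ∘ p) '' Set.univ from
    (Set.encard_le_encard this).trans ((Set.encard_image_le _ _).trans_eq (Set.encard_univ ι))
  rintro _ ⟨⟨W, hW, rfl⟩, hWX⟩
  by_contra hne
  obtain ⟨v, hvW, hv⟩ := Module.Dual.exists_forall_mem_ne_zero_of_forall_exists W
    (fun i => dotProductEquiv ℂ (Fin 3) (p i).rep) fun i => by
      by_contra! hle
      have hWi : W = (dotProductEquiv ℂ (Fin 3) (p i).rep).ker := Submodule.eq_of_le_of_finrank_eq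
        hle (by rw [hW, finrank_ker_dotProductEquiv (p i).rep_nonzero])
      refine hne ⟨i, trivial, ?_⟩
      rw [hWi, ← polar_mk (p i).rep_nonzero, mk_rep, Function.comp_apply]
  have hv0 : v ≠ 0 := fun h => hv (Classical.arbitrary ι) (by rw [h, map_zero])
  obtain ⟨i, hi⟩ := Set.mem_iUnion.1 (hX <| hWX (mk_submodule_le_iff.2 hvW : mk ℂ v hv0 ∈ _))
  rw [← mk_rep (p i), mk_mem_polar_mk, dotProduct_comm] at hi
  exact hv i hi

/-! ### Fixed points, fixed lines and eigenvectors -/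

lemma exists_smul_eq_of_dotProduct_eq_zero {v w : V3} (h : ∀ z, z ⬝ᵥ v = 0 → z ⬝ᵥ w = 0) :
    ∃ c : ℂ, c • v = w := by
  have hmem : dotProductEquiv ℂ (Fin 3) w ∈ Submodule.span ℂ
      (Set.range fun _ : Unit => dotProductEquiv ℂ (Fin 3) v) :=
    mem_span_of_iInf_ker_le_ker (by
      simpa [SetLike.le_def, dotProduct_comm _ v, dotProduct_comm _ w] using h)
  rw [Set.range_const, Submodule.mem_span_singleton] at hmem
  obtain ⟨c, hc⟩ := hmem
  exact ⟨c, (dotProductEquiv ℂ (Fin 3)).injective (by rw [map_smul, hc])⟩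

lemma exists_eq_vecMulVec {M : Mat3} {v : V3} (h : ∀ z, z ⬝ᵥ v = 0 → M *ᵥ z = 0) :
    ∃ u, M = vecMulVec u v := by
  choose u hu using fun i => exists_smul_eq_of_dotProduct_eq_zero (v := v) (w := M i) fun z hz => by
    rw [dotProduct_comm]
    exact congrFun (h z hz) i
  exact ⟨u, Matrix.ext fun i j => (congrFun (hu i) j).symm⟩

lemma exists_mulVec_rep_eq_smul {A : SL3} {x : P2} (h : (A : PSL3) • x = x) :
    ∃ c : ℂ, A.1 *ᵥ x.rep = c • x.rep := by
  rw [← mk_rep x, mk_smul_mk, mk_eq_mk_iff'] at h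
  obtain ⟨c, hc⟩ := h
  exact ⟨c, hc.symm⟩

lemma exists_vecMul_rep_eq_smul {A : SL3} {p : P2} (h : (A : PSL3) • polar p = polar p) :
    ∃ c : ℂ, p.rep ᵥ* A.1 = c • p.rep := by
  obtain ⟨c, hc⟩ := exists_smul_eq_of_dotProduct_eq_zero (v := p.rep) (w := p.rep ᵥ* A.1)
    fun z hz => by
      rw [dotProduct_comm, ← dotProduct_mulVec, dotProduct_comm]
      rcases eq_or_ne z 0 with rfl | hz0
      · rw [mulVec_zero, zero_dotProduct]
      · have hmem : mk ℂ z hz0 ∈ polar p := by rwa [← mk_rep p, mk_mem_polar_mk]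
        have hAmem := h ▸ Set.smul_mem_smul_set (a := (A : PSL3)) hmem
        rwa [mk_smul_mk, ← mk_rep p, mk_mem_polar_mk] at hAmem
  exact ⟨c, hc.symm⟩

lemma eq_of_smul_rep_eq {x y : P2} {c : ℂ} (h : c • x.rep = y.rep) : y = x := by
  rw [← mk_rep x, ← mk_rep y, mk_eq_mk_iff']
  exact ⟨c, h⟩

lemma exists_smul_add_smul_eq {p x y : P2} (hxy : x ≠ y) (hx : x ∈ polar p) (hy : y ∈ polar p)
    {z : V3} (hz : z ⬝ᵥ p.rep = 0) : ∃ α β : ℂ, α • x.rep + β • y.rep = z := by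
  have hmem : ∀ v : V3, v ∈ (dotProductEquiv ℂ (Fin 3) p.rep).ker ↔ v ⬝ᵥ p.rep = 0 := fun v => by
    rw [LinearMap.mem_ker, dotProductEquiv_apply_apply, dotProduct_comm]
  have hspan : Submodule.span ℂ (Set.range ![x.rep, y.rep]) =
      (dotProductEquiv ℂ (Fin 3) p.rep).ker := by
    refine Submodule.eq_of_le_of_finrank_eq (Submodule.span_le.2 ?_) ?_
    · simp [Set.insert_subset_iff, hmem, mem_polar_iff.1 hx, mem_polar_iff.1 hy]
    · rw [finrank_ker_dotProductEquiv p.rep_nonzero, finrank_span_eq_card, Fintype.card_fin]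
      exact linearIndependent_pair_iff_ne.2 hxy
  rwa [← hmem, ← hspan, range_cons, range_cons, range_empty, Set.union_empty,
    Set.singleton_union, Submodule.mem_span_pair] at hz

lemma eq_zero_of_mulVec_rep_eq_zero {M : Mat3} {p x y z : P2} (hxy : x ≠ y) (hx : x ∈ polar p)
    (hy : y ∈ polar p) (hz : z ∉ polar p) (hMx : M *ᵥ x.rep = 0) (hMy : M *ᵥ y.rep = 0)
    (hMz : M *ᵥ z.rep = 0) : M = 0 := by
  obtain ⟨u, rfl⟩ := exists_eq_vecMulVec (M := M) (v := p.rep) fun w hw => by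
    obtain ⟨α, β, rfl⟩ := exists_smul_add_smul_eq hxy hx hy hw
    simp only [mulVec_add, mulVec_smul, hMx, hMy, smul_zero, add_zero]
  rw [vecMulVec_mulVec, dotProduct_comm] at hMz
  have hu : u = 0 := (smul_eq_zero.1 hMz).resolve_left (by simpa [mem_polar_iff] using hz)
  rw [hu, zero_vecMulVec]

lemma exists_eq_smul_one_add_vecMulVec {M : Mat3} {p x y w : P2} (hxy : x ≠ y) (hxw : x ≠ w)
    (hyw : y ≠ w) (hx : x ∈ polar p) (hy : y ∈ polar p) (hw : w ∈ polar p)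
    (hMx : ∃ c : ℂ, M *ᵥ x.rep = c • x.rep) (hMy : ∃ c : ℂ, M *ᵥ y.rep = c • y.rep)
    (hMw : ∃ c : ℂ, M *ᵥ w.rep = c • w.rep) :
    ∃ a : ℂ, ∃ u, M = a • (1 : Mat3) + vecMulVec u p.rep := by
  obtain ⟨a, ha⟩ := hMx
  obtain ⟨b, hb⟩ := hMy
  obtain ⟨c, hc⟩ := hMw
  obtain ⟨α, β, hαβ⟩ := exists_smul_add_smul_eq hxy hx hy (mem_polar_iff.1 hw)
  have hind : LinearIndependent ℂ ![x.rep, y.rep] := linearIndependent_pair_iff_ne.2 hxy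
  have hα : α ≠ 0 := by
    rintro rfl
    exact hyw (eq_of_smul_rep_eq (by rwa [zero_smul, zero_add] at hαβ)).symm
  have hβ : β ≠ 0 := by
    rintro rfl
    exact hxw (eq_of_smul_rep_eq (by rwa [zero_smul, add_zero] at hαβ)).symm
  have hzero : (α * (a - c)) • x.rep + (β * (b - c)) • y.rep = 0 := by
    rw [← hαβ, mulVec_add, mulVec_smul, mulVec_smul, ha, hb] at hc
    linear_combination (norm := module) hc
  obtain ⟨rfl, rfl⟩ : a = b ∧ b = c := by
    have h := LinearIndependent.pair_iff.1 hind _ _ hzero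
    simp only [mul_eq_zero, hα, hβ, false_or, sub_eq_zero] at h
    exact ⟨h.1.trans h.2.symm, h.2⟩
  obtain ⟨u, hu⟩ := exists_eq_vecMulVec (M := M - a • 1) (v := p.rep) fun z hz => by
    obtain ⟨α, β, rfl⟩ := exists_smul_add_smul_eq hxy hx hy hz
    rw [sub_mulVec, smul_mulVec, one_mulVec, mulVec_add, mulVec_smul, mulVec_smul, ha, hb,
      smul_add, smul_comm α, smul_comm β, sub_self]
  exact ⟨a, u, by rw [← hu, add_sub_cancel]⟩

/-! ### Groups with few singular lines -/

section SingularSet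

variable {H : Subgroup PSL3}

lemma compl_regularSet_subset_iUnion_polar {ι : Type*} {q : ι → P2} (hq : ⋂ i, polar (q i) = ∅)
    (hfix : ∀ γ ∈ H, ∀ i, γ • polar (q i) = polar (q i)) :
    (regularSet H)ᶜ ⊆ ⋃ i, polar (q i) := by
  have heigen : limCone H ⊆
      {τ | ∀ i z, z ⬝ᵥ (q i).rep = 0 → z ⬝ᵥ ((q i).rep ᵥ* τ) = 0} := by
    refine closure_minimal ?_ ?_
    · rintro _ ⟨c, A, hA, rfl⟩ i z hz
      obtain ⟨d, hd⟩ := exists_vecMul_rep_eq_smul (hfix _ hA i)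
      rw [vecMul_smul, hd, dotProduct_smul, dotProduct_smul, hz, smul_zero, smul_zero]
    · simp only [Set.ofPred_forall]
      exact isClosed_iInter fun i => isClosed_iInter fun z => isClosed_iInter fun _ =>
        isClosed_eq (by fun_prop) continuous_const
  refine Set.compl_subset_comm.1 fun z hz τ hτ hτ0 hzτ => hτ0 ?_
  have hrow : ∀ i, (q i).rep ᵥ* τ = 0 := fun i => by
    obtain ⟨c, hc⟩ := exists_smul_eq_of_dotProduct_eq_zero (heigen hτ i)
    have hcz : c * ((q i).rep ⬝ᵥ z.rep) = 0 := by
      rw [← smul_eq_mul, ← smul_dotProduct, hc, ← dotProduct_mulVec, show τ *ᵥ z.rep = 0 from hzτ,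
        dotProduct_zero]
    have hzq : (q i).rep ⬝ᵥ z.rep ≠ 0 := fun h =>
      hz (Set.mem_iUnion.2 ⟨i, mem_polar_iff.2 (by rwa [dotProduct_comm])⟩)
    rw [← hc, (mul_eq_zero.1 hcz).resolve_right hzq, zero_smul]
  by_contra hne
  obtain ⟨j, hj⟩ : ∃ j, τ.col j ≠ 0 := by
    by_contra! hcol
    exact hne (Matrix.ext fun i j => congrFun (hcol j) i)
  refine (Set.eq_empty_iff_forall_notMem.1 hq) (mk ℂ _ hj) (Set.mem_iInter.2 fun i => ?_)
  rw [← mk_rep (q i), mk_mem_polar_mk, dotProduct_comm]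
  exact congrFun (hrow i) j

lemma compl_regularSet_subset_polar {p x y : P2} (hxy : x ≠ y) (hx : x ∈ polar p)
    (hy : y ∈ polar p)
    (h : ∀ A : SL3, (A : PSL3) ∈ H → ‖A.1 *ᵥ x.rep‖ = ‖x.rep‖ ∧ ‖A.1 *ᵥ y.rep‖ = ‖y.rep‖) :
    (regularSet H)ᶜ ⊆ polar p := by
  have hnorm : ∀ w : P2, (∀ A : SL3, (A : PSL3) ∈ H → ‖A.1 *ᵥ w.rep‖ = ‖w.rep‖) →
      limCone H ⊆ {τ | ‖τ *ᵥ w.rep‖ ^ 3 = ‖τ.det‖ * ‖w.rep‖ ^ 3} := fun w hw => by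
    refine closure_minimal ?_ (isClosed_eq (by fun_prop) (by fun_prop))
    rintro _ ⟨c, A, hA, rfl⟩
    rw [Set.mem_ofPred_eq, smul_mulVec, norm_smul, hw A hA, det_smul, A.2, mul_one, norm_pow,
      Fintype.card_fin, mul_pow]
  refine Set.compl_subset_comm.1 fun z hz τ hτ hτ0 hzτ => hτ0 ?_
  have hdet : τ.det = 0 := exists_mulVec_eq_zero_iff.1 ⟨z.rep, z.rep_nonzero, hzτ⟩
  have hkill : ∀ w : P2, (∀ A : SL3, (A : PSL3) ∈ H → ‖A.1 *ᵥ w.rep‖ = ‖w.rep‖) →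
      τ *ᵥ w.rep = 0 := fun w hw => by
    simpa [hdet] using hnorm w hw hτ
  exact eq_zero_of_mulVec_rep_eq_zero hxy hx hy hz (hkill x fun A hA => (h A hA).1)
    (hkill y fun A hA => (h A hA).2) hzτ

lemma compl_regularSet_subset_insert_polar {u v : V3} {hu : u ≠ 0} {hv : v ≠ 0}
    (h : ∀ A : SL3, (A : PSL3) ∈ H → ∃ a t : ℂ, A.1 = a • (1 : Mat3) + t • vecMulVec u v) :
    (regularSet H)ᶜ ⊆ insert (mk ℂ u hu) (polar (mk ℂ v hv)) := by
  have hspan : limCone H ⊆ Submodule.span ℂ {(1 : Mat3), vecMulVec u v} := by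
    refine closure_minimal ?_ (Submodule.closed_of_finiteDimensional _)
    rintro _ ⟨c, A, hA, rfl⟩
    obtain ⟨a, t, hAeq⟩ := h A hA
    exact Submodule.smul_mem _ c (Submodule.mem_span_pair.2 ⟨a, t, hAeq.symm⟩)
  refine Set.compl_subset_comm.1 fun z hz τ hτ hτ0 hzτ => hτ0 ?_
  induction z using Projectivization.ind with
  | h w hw =>
    obtain ⟨hwu, hwv⟩ := not_or.1 hz
    obtain ⟨a, t, rfl⟩ := Submodule.mem_span_pair.1 (hspan hτ)
    have hcomb : a • w + (t * (v ⬝ᵥ w)) • u = 0 := by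
      rw [mk_mem_projKer] at hzτ
      simpa [add_mulVec, smul_mulVec, vecMulVec_mulVec, mul_smul] using hzτ
    have hind : LinearIndependent ℂ ![w, u] := by
      rw [← crossProduct_ne_zero_iff_linearIndependent]
      exact fun h0 => hwu ((mk_eq_mk_iff_crossProduct_eq_zero hw hu).2 h0)
    obtain ⟨ha, ht⟩ := LinearIndependent.pair_iff.1 hind _ _ hcomb
    have ht0 : t = 0 := (mul_eq_zero.1 ht).resolve_right fun h0 =>
      hwv (mk_mem_polar_mk.2 (by rwa [dotProduct_comm]))
    rw [ha, ht0, zero_smul, zero_smul, add_zero]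

end SingularSet

section Perspectivities

variable {H : Subgroup PSL3}

lemma det_smul_one_add_vecMulVec (a : ℂ) (u v : V3) :
    (a • (1 : Mat3) + vecMulVec u v).det = a ^ 2 * (a + v ⬝ᵥ u) := by
  simp only [det_fin_three, Matrix.add_apply, Matrix.smul_apply, one_apply, ↓reduceIte, smul_eq_mul,
    vecMulVec_apply, Fin.reduceEq, dotProduct, Fin.sum_univ_three]
  ring

lemma norm_ne_of_det_eq_one {A : SL3} {a : ℂ} {u v : V3}
    (hA : A.1 = a • (1 : Mat3) + vecMulVec u v) (ha : ‖a‖ ≠ 1) : ‖a‖ ≠ ‖a + v ⬝ᵥ u‖ := by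
  intro h
  have hdet := congrArg norm (det_smul_one_add_vecMulVec a u v)
  rw [← hA, A.2, norm_one, norm_mul, norm_pow, ← h, ← pow_succ] at hdet
  exact ha ((pow_eq_one_iff_of_nonneg (norm_nonneg a) three_ne_zero).1 hdet.symm)

lemma mk_eq_one_of_contracted [DiscreteTopology H] {g c : SL3} (hg : (g : PSL3) ∈ H)
    (hc : (c : PSL3) ∈ H) {α : ℂ} (hα : ‖α‖ < 1)
    (h : g.1 * (c.1 - 1) = α • ((c.1 - 1) * g.1)) : (c : PSL3) = 1 := by
  have hpow : ∀ k : ℕ, (g ^ k).1 * (c.1 - 1) = α ^ k • ((c.1 - 1) * (g ^ k).1) := fun k => by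
    induction k with
    | zero => simp
    | succ k ih =>
      have hsucc : (g ^ (k + 1)).1 = (g ^ k).1 * g.1 := congrArg Subtype.val (pow_succ g k)
      rw [hsucc, mul_assoc, h, mul_smul_comm, ← mul_assoc, ih, smul_mul_assoc, smul_smul,
        mul_assoc, pow_succ']
  have hconj : ∀ k : ℕ, (g ^ k * c * (g ^ k)⁻¹).1 = 1 + α ^ k • (c.1 - 1) := fun k => by
    have hinv : (g ^ k).1 * (g ^ k)⁻¹.1 = 1 := congrArg Subtype.val (mul_inv_cancel (g ^ k))
    calc (g ^ k * c * (g ^ k)⁻¹).1 = (g ^ k).1 * (1 + (c.1 - 1)) * (g ^ k)⁻¹.1 := by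
          rw [add_sub_cancel]; rfl
      _ = 1 + α ^ k • (c.1 - 1) := by
          rw [mul_add, mul_one, add_mul, hpow, smul_mul_assoc, mul_assoc, hinv, mul_one]
  have hlim : Tendsto (fun k : ℕ => g ^ k * c * (g ^ k)⁻¹) atTop (𝓝 1) := by
    refine SpecialLinearGroup.isClosedEmbedding_val.isEmbedding.tendsto_nhds_iff.2 ?_
    have h0 := ((tendsto_pow_atTop_nhds_zero_of_norm_lt_one hα).smul_const (c.1 - 1)).const_add 1
    rw [zero_smul, add_zero] at h0
    exact h0.congr fun k => (hconj k).symm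
  have hmem : ∀ k : ℕ, ((g ^ k * c * (g ^ k)⁻¹ : SL3) : PSL3) ∈ H := fun k =>
    H.mul_mem (H.mul_mem (H.pow_mem hg k) hc) (H.inv_mem (H.pow_mem hg k))
  have hlimH : Tendsto (fun k : ℕ => (⟨_, hmem k⟩ : H)) atTop (𝓝 1) :=
    tendsto_subtype_rng.2 ((continuous_quot_mk.tendsto (1 : SL3)).comp hlim)
  rw [nhds_discrete] at hlimH
  obtain ⟨k, hk⟩ := (tendsto_pure.1 hlimH).exists
  have hone : ((g ^ k : SL3) : PSL3) * c * ((g ^ k : SL3) : PSL3)⁻¹ = 1 := congrArg Subtype.val hk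
  exact conj_eq_one_iff.1 hone

lemma isUnit_val (A : SL3) : IsUnit A.1 :=
  (isUnit_iff_isUnit_det _).2 (by rw [A.2]; exact isUnit_one)

lemma mk_eq_one_of_norm_ne [DiscreteTopology H] {g c : SL3} (hg : (g : PSL3) ∈ H)
    (hc : (c : PSL3) ∈ H) {α β : ℂ} (hα : g.1 * (c.1 - 1) = α • (c.1 - 1))
    (hβ : (c.1 - 1) * g.1 = β • (c.1 - 1)) (hne : ‖α‖ ≠ ‖β‖) : (c : PSL3) = 1 := by
  by_cases hc1 : c = 1
  · rw [hc1, QuotientGroup.mk_one]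
  have hm : c.1 - 1 ≠ 0 := fun h => hc1 (Subtype.ext (sub_eq_zero.1 h))
  have hα0 : α ≠ 0 := by
    rintro rfl
    exact hm ((isUnit_val g).mul_right_eq_zero.1 (by rw [hα, zero_smul]))
  have hβ0 : β ≠ 0 := by
    rintro rfl
    exact hm ((isUnit_val g).mul_left_eq_zero.1 (by rw [hβ, zero_smul]))
  rcases hne.lt_or_gt with hlt | hgt
  · refine mk_eq_one_of_contracted hg hc (α := α / β) ?_ ?_
    · rwa [norm_div, div_lt_one (norm_pos_iff.2 hβ0)]
    · rw [hα, hβ, smul_smul, div_mul_cancel₀ _ hβ0]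
  · refine mk_eq_one_of_contracted (H.inv_mem hg : ((g⁻¹ : SL3) : PSL3) ∈ H) hc (α := β / α) ?_ ?_
    · rwa [norm_div, div_lt_one (norm_pos_iff.2 hα0)]
    · have hinv : g.1 * g⁻¹.1 = 1 := congrArg Subtype.val (mul_inv_cancel g)
      refine (isUnit_val g).mul_left_cancel ?_
      rw [← mul_assoc, hinv, one_mul, mul_smul_comm, ← mul_assoc, hα, smul_mul_assoc, smul_smul,
        div_mul_cancel₀ _ hα0, ← smul_mul_assoc, ← hβ, mul_assoc, hinv, mul_one]

lemma commutator_eq_zero_of_norm_ne [DiscreteTopology H] {g h : SL3} (hg : (g : PSL3) ∈ H)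
    (hh : (h : PSL3) ∈ H) {n : Mat3} (hn : g.1 * h.1 - h.1 * g.1 = n) {α β β' : ℂ}
    (hα : g.1 * n = α • n) (hβ : n * g.1 = β • n) (hβ' : n * h.1 = β' • n) (hne : ‖α‖ ≠ ‖β‖) :
    n = 0 := by
  by_contra hn0
  set c : SL3 := g * h * g⁻¹ * h⁻¹
  have hcm : (c.1 - 1) * (h.1 * g.1) = n := by
    have hc : c.1 * (h.1 * g.1) = g.1 * h.1 := congrArg Subtype.val
      (show c * (h * g) = g * h by simp [c, mul_assoc])
    rw [sub_mul, one_mul, hc, hn]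
  have hcn : n = (β * β') • (c.1 - 1) := by
    refine ((isUnit_val h).mul (isUnit_val g)).mul_right_cancel ?_
    rw [smul_mul_assoc, hcm, ← mul_assoc, hβ', smul_mul_assoc, hβ,
      smul_smul, mul_comm]
  have hμ : β * β' ≠ 0 := by
    intro h0
    rw [h0, zero_smul] at hcn
    exact hn0 hcn
  have hc1 : c.1 - 1 = (β * β')⁻¹ • n := by rw [hcn, inv_smul_smul₀ hμ]
  have hc : (c : PSL3) = 1 := by
    refine mk_eq_one_of_norm_ne hg (α := α) (β := β) ?_ ?_ ?_ hne
    · exact H.mul_mem (H.mul_mem (H.mul_mem hg hh) (H.inv_mem hg)) (H.inv_mem hh)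
    · rw [hc1, mul_smul_comm, hα, smul_comm]
    · rw [hc1, smul_mul_assoc, hβ, smul_comm]
  obtain ⟨r, -, hr⟩ := Matrix.SpecialLinearGroup.mem_center_iff.1
    ((QuotientGroup.eq_one_iff c).1 hc)
  have htrace : n.trace = 0 := by rw [← hn, trace_sub, trace_mul_comm, sub_self]
  have hr1 : r = 1 := by
    rw [hcn, ← hr, trace_smul] at htrace
    have h3 : 3 * r - 3 = 0 := by simpa [hμ] using htrace
    linear_combination h3 / 3
  exact hn0 (by rw [hcn, ← hr, hr1, map_one, sub_self, smul_zero])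

lemma smul_one_add_vecMulVec_mul_vecMulVec (a : ℂ) (u v w z : V3) :
    (a • (1 : Mat3) + vecMulVec u v) * vecMulVec w z = vecMulVec (a • w + (v ⬝ᵥ w) • u) z := by
  rw [add_mul, smul_mul_assoc, one_mul, vecMulVec_mul_vecMulVec, add_vecMulVec, smul_vecMulVec,
    smul_vecMulVec, vecMulVec_smul]

lemma vecMulVec_mul_smul_one_add_vecMulVec (a : ℂ) (u v w z : V3) :
    vecMulVec w z * (a • (1 : Mat3) + vecMulVec u v) = vecMulVec w (a • z + (z ⬝ᵥ u) • v) := by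
  rw [mul_add, mul_smul_comm, mul_one, vecMulVec_mul_vecMulVec, vecMulVec_add, vecMulVec_smul,
    vecMulVec_smul]

lemma commutator_smul_one_add_vecMulVec (a b : ℂ) (u v w z : V3) :
    (a • (1 : Mat3) + vecMulVec u v) * (b • (1 : Mat3) + vecMulVec w z) -
      (b • (1 : Mat3) + vecMulVec w z) * (a • (1 : Mat3) + vecMulVec u v) =
      (v ⬝ᵥ w) • vecMulVec u z - (z ⬝ᵥ u) • vecMulVec w v := by
  simp only [add_mul, mul_add, smul_mul_assoc, mul_smul_comm, one_mul, mul_one,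
    vecMulVec_mul_vecMulVec, vecMulVec_smul]
  module

lemma smul_eq_smul_of_axis [DiscreteTopology H] {g h : SL3} (hg : (g : PSL3) ∈ H)
    (hh : (h : PSL3) ∈ H) {a b : ℂ} {u w v : V3} (hv : v ≠ 0)
    (hgu : g.1 = a • (1 : Mat3) + vecMulVec u v) (hhw : h.1 = b • (1 : Mat3) + vecMulVec w v)
    (hne : ‖a‖ ≠ ‖a + v ⬝ᵥ u‖) : (v ⬝ᵥ w) • u = (v ⬝ᵥ u) • w := by
  have horth : v ⬝ᵥ ((v ⬝ᵥ w) • u - (v ⬝ᵥ u) • w) = 0 := by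
    simp [mul_comm]
  have hn : vecMulVec ((v ⬝ᵥ w) • u - (v ⬝ᵥ u) • w) v = 0 := by
    refine commutator_eq_zero_of_norm_ne hg hh (β' := b + v ⬝ᵥ w) ?_ ?_ ?_ ?_ hne
    · rw [hgu, hhw, commutator_smul_one_add_vecMulVec, sub_vecMulVec, smul_vecMulVec,
        smul_vecMulVec]
    · rw [hgu, smul_one_add_vecMulVec_mul_vecMulVec, horth, zero_smul, add_zero, smul_vecMulVec]
    · rw [hgu, vecMulVec_mul_smul_one_add_vecMulVec, ← add_smul, vecMulVec_smul]
    · rw [hhw, vecMulVec_mul_smul_one_add_vecMulVec, ← add_smul, vecMulVec_smul]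
  exact sub_eq_zero.1 ((vecMulVec_eq_zero.1 hn).resolve_right hv)

lemma smul_eq_smul_of_center [DiscreteTopology H] {g h : SL3} (hg : (g : PSL3) ∈ H)
    (hh : (h : PSL3) ∈ H) {a b : ℂ} {u v z : V3} (hu : u ≠ 0)
    (hgv : g.1 = a • (1 : Mat3) + vecMulVec u v) (hhz : h.1 = b • (1 : Mat3) + vecMulVec u z)
    (hne : ‖a‖ ≠ ‖a + v ⬝ᵥ u‖) : (v ⬝ᵥ u) • z = (z ⬝ᵥ u) • v := by
  have horth : ((v ⬝ᵥ u) • z - (z ⬝ᵥ u) • v) ⬝ᵥ u = 0 := by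
    simp [mul_comm]
  have hn : vecMulVec u ((v ⬝ᵥ u) • z - (z ⬝ᵥ u) • v) = 0 := by
    refine commutator_eq_zero_of_norm_ne hg hh (β' := b) ?_ ?_ ?_ ?_ hne.symm
    · rw [hgv, hhz, commutator_smul_one_add_vecMulVec, vecMulVec_sub, vecMulVec_smul,
        vecMulVec_smul]
    · rw [hgv, smul_one_add_vecMulVec_mul_vecMulVec, ← add_smul, smul_vecMulVec]
    · rw [hgv, vecMulVec_mul_smul_one_add_vecMulVec, horth, zero_smul, add_zero, vecMulVec_smul]
    · rw [hhz, vecMulVec_mul_smul_one_add_vecMulVec, horth, zero_smul, add_zero, vecMulVec_smul]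
  exact sub_eq_zero.1 ((vecMulVec_eq_zero.1 hn).resolve_left hu)

lemma compl_regularSet_subset_of_axis [DiscreteTopology H] {p x y : P2} (hxy : x ≠ y)
    (hx : x ∈ polar p) (hy : y ∈ polar p)
    (h : ∀ A : SL3, (A : PSL3) ∈ H → ∃ a : ℂ, ∃ u, A.1 = a • (1 : Mat3) + vecMulVec u p.rep) :
    ∃ q, (regularSet H)ᶜ ⊆ insert q (polar p) := by
  choose! a u hau using h
  by_cases hiso : ∀ A : SL3, (A : PSL3) ∈ H → ‖a A‖ = 1
  · have hnorm : ∀ w ∈ polar p, ∀ A : SL3, (A : PSL3) ∈ H → ‖A.1 *ᵥ w.rep‖ = ‖w.rep‖ := by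
      intro w hw A hA
      rw [hau A hA, add_mulVec, smul_mulVec, one_mulVec, vecMulVec_mulVec, dotProduct_comm,
        mem_polar_iff.1 hw, MulOpposite.op_zero, zero_smul, add_zero, norm_smul, hiso A hA, one_mul]
    exact ⟨x, (compl_regularSet_subset_polar hxy hx hy fun A hA =>
      ⟨hnorm x hx A hA, hnorm y hy A hA⟩).trans (Set.subset_insert _ _)⟩
  push Not at hiso
  obtain ⟨g, hg, hag⟩ := hiso
  have hne := norm_ne_of_det_eq_one (hau g hg) hag
  have hpu : p.rep ⬝ᵥ u g ≠ 0 := fun h0 => hne (by rw [h0, add_zero])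
  have hu : u g ≠ 0 := fun h0 => hpu (by rw [h0, dotProduct_zero])
  refine ⟨mk ℂ (u g) hu, ?_⟩
  rw [← mk_rep p]
  refine compl_regularSet_subset_insert_polar fun A hA =>
    ⟨a A, (p.rep ⬝ᵥ u g)⁻¹ * (p.rep ⬝ᵥ u A), ?_⟩
  rw [mul_smul, ← smul_vecMulVec,
    smul_eq_smul_of_axis hg hA p.rep_nonzero (hau g hg) (hau A hA) hne, smul_vecMulVec,
    inv_smul_smul₀ hpu, hau A hA]

lemma compl_regularSet_subset_of_center [DiscreteTopology H] {x v : P2} (hxv : x ≠ v)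
    (h : ∀ A : SL3, (A : PSL3) ∈ H →
      ∃ a : ℂ, ∃ φ, φ ⬝ᵥ v.rep = 0 ∧ A.1 = a • (1 : Mat3) + vecMulVec x.rep φ) :
    ∃ p, (regularSet H)ᶜ ⊆ insert x (polar p) := by
  choose! a φ hφv haφ using h
  by_cases hiso : ∀ A : SL3, (A : PSL3) ∈ H → ‖a A‖ = 1
  · refine ⟨cross x v, (compl_regularSet_subset_polar hxv (orthogonal_cross_left hxv)
      (orthogonal_cross_right hxv) fun A hA => ⟨?_, ?_⟩).trans (Set.subset_insert _ _)⟩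
    · have hdet := congrArg norm (det_smul_one_add_vecMulVec (a A) x.rep (φ A))
      rw [← haφ A hA, A.2, norm_one, norm_mul, norm_pow, hiso A hA, one_pow, one_mul] at hdet
      rw [haφ A hA, add_mulVec, smul_mulVec, one_mulVec, vecMulVec_mulVec, op_smul_eq_smul,
        ← add_smul, norm_smul, ← hdet, one_mul]
    · rw [haφ A hA, add_mulVec, smul_mulVec, one_mulVec, vecMulVec_mulVec, hφv A hA,
        MulOpposite.op_zero, zero_smul, add_zero, norm_smul, hiso A hA, one_mul]
  push Not at hiso
  obtain ⟨g, hg, hag⟩ := hiso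
  have hne := norm_ne_of_det_eq_one (haφ g hg) hag
  have hφx : φ g ⬝ᵥ x.rep ≠ 0 := fun h0 => hne (by rw [h0, add_zero])
  have hφ : φ g ≠ 0 := fun h0 => hφx (by rw [h0, zero_dotProduct])
  refine ⟨mk ℂ (φ g) hφ, ?_⟩
  rw [← mk_rep x]
  refine compl_regularSet_subset_insert_polar fun A hA =>
    ⟨a A, (φ g ⬝ᵥ x.rep)⁻¹ * (φ A ⬝ᵥ x.rep), ?_⟩
  rw [mul_smul, ← vecMulVec_smul, ← smul_eq_smul_of_center hg hA x.rep_nonzero (haφ g hg)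
    (haφ A hA) hne, vecMulVec_smul, inv_smul_smul₀ hφx, haφ A hA]

end Perspectivities

lemma encard_linesIn_le_two {X : Set P2} {q p : P2} (hX : X ⊆ insert q (polar p)) :
    (linesIn X).encard ≤ 2 := by
  obtain ⟨w, hw, hw0⟩ := Submodule.exists_mem_ne_zero_of_ne_bot
    (p := (dotProductEquiv ℂ (Fin 3) q.rep).ker) fun h => by
      have := finrank_ker_dotProductEquiv q.rep_nonzero
      rw [h, finrank_bot] at this
      norm_num at this
  have hq : q ∈ polar (mk ℂ w hw0) := by
    rw [← mk_rep q, mk_mem_polar_mk]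
    exact hw
  refine (encard_linesIn_le (p := ![mk ℂ w hw0, p]) ?_).trans_eq (ENat.card_eq_coe_fintype_card)
  rintro z hz
  rcases hX hz with rfl | hzp
  exacts [Set.mem_iUnion.2 ⟨0, hq⟩, Set.mem_iUnion.2 ⟨1, hzp⟩]

section Rigidity

variable {H : Subgroup PSL3}

lemma encard_linesIn_le_of_fixed_lines {ι : Type*} [Finite ι] [Nonempty ι] {ℓ : ι → Set P2}
    (hℓ : ∀ i, IsLine (ℓ i)) (hempty : ⋂ i, ℓ i = ∅) (hfix : ∀ γ ∈ H, ∀ i, γ • ℓ i = ℓ i) :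
    (linesIn (regularSet H)ᶜ).encard ≤ ENat.card ι := by
  choose p hp using fun i => exists_polar_eq (hℓ i)
  obtain rfl : (fun i => polar (p i)) = ℓ := funext hp
  exact encard_linesIn_le (compl_regularSet_subset_iUnion_polar hempty hfix)

lemma smul_polar_cross {γ : PSL3} {x y : P2} (hxy : x ≠ y) (hx : γ • x = x) (hy : γ • y = y) :
    γ • polar (cross x y) = polar (cross x y) := by
  have hmem : ∀ z, z ∈ polar (cross x y) → γ • z = z → z ∈ γ • polar (cross x y) :=
    fun z hz hγz => ⟨z, hz, hγz⟩
  exact isLine_unique (isLine_smul (isLine_polar _) γ) (isLine_polar _) hxy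
    (hmem x (orthogonal_cross_left hxy) hx) (hmem y (orthogonal_cross_right hxy) hy)
    (orthogonal_cross_left hxy) (orthogonal_cross_right hxy)

lemma encard_linesIn_le_three_of_fixed_points [DiscreteTopology H] {x y w : P2} (hxy : x ≠ y)
    (hxw : x ≠ w) (hyw : y ≠ w) (hx : ∀ γ ∈ H, γ • x = x) (hy : ∀ γ ∈ H, γ • y = y)
    (hw : ∀ γ ∈ H, γ • w = w) : (linesIn (regularSet H)ᶜ).encard ≤ 3 := by
  have hxp : x ∈ polar (cross x y) := orthogonal_cross_left hxy
  have hyp : y ∈ polar (cross x y) := orthogonal_cross_right hxy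
  by_cases hwp : w ∈ polar (cross x y)
  · obtain ⟨q, hq⟩ := compl_regularSet_subset_of_axis (H := H) hxy hxp hyp fun A hA =>
      exists_eq_smul_one_add_vecMulVec hxy hxw hyw hxp hyp hwp (exists_mulVec_rep_eq_smul (hx _ hA))
        (exists_mulVec_rep_eq_smul (hy _ hA)) (exists_mulVec_rep_eq_smul (hw _ hA))
    exact (encard_linesIn_le_two hq).trans (by norm_num)
  · suffices hempty : ⋂ i, ![polar (cross x y), polar (cross x w), polar (cross y w)] i = ∅ by
      refine (encard_linesIn_le_of_fixed_lines (fun i => ?_) hempty fun γ hγ i => ?_).trans_eq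
        ENat.card_eq_coe_fintype_card
      · fin_cases i <;> exact isLine_polar _
      · fin_cases i
        exacts [smul_polar_cross hxy (hx γ hγ) (hy γ hγ), smul_polar_cross hxw (hx γ hγ) (hw γ hγ),
          smul_polar_cross hyw (hy γ hγ) (hw γ hγ)]
    refine Set.eq_empty_of_forall_notMem fun z hz => hxy ?_
    rw [Set.mem_iInter] at hz
    have hzx : z = x := by
      by_contra hne
      exact hwp (isLine_unique (isLine_polar _) (isLine_polar _) hne (hz 1)
        (orthogonal_cross_left hxw) (hz 0) hxp ▸ orthogonal_cross_right hxw)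
    have hzy : z = y := by
      by_contra hne
      exact hwp (isLine_unique (isLine_polar _) (isLine_polar _) hne (hz 2)
        (orthogonal_cross_left hyw) (hz 0) hyp ▸ orthogonal_cross_right hyw)
    exact hzx.symm.trans hzy

lemma exists_eq_smul_one_add_vecMulVec_of_smul_polar_eq {A : SL3} {x p q r : P2} (hpq : p ≠ q)
    (hpr : p ≠ r) (hqr : q ≠ r) (hxp : x ∈ polar p) (hxq : x ∈ polar q) (hxr : x ∈ polar r)
    (hp : (A : PSL3) • polar p = polar p) (hq : (A : PSL3) • polar q = polar q)
    (hr : (A : PSL3) • polar r = polar r) :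
    ∃ a : ℂ, ∃ φ, A.1 = a • (1 : Mat3) + vecMulVec x.rep φ := by
  have hrow : ∀ s, (A : PSL3) • polar s = polar s → ∃ c : ℂ, A.1ᵀ *ᵥ s.rep = c • s.rep :=
    fun s hs => by
      rw [mulVec_transpose]
      exact exists_vecMul_rep_eq_smul hs
  obtain ⟨a, φ, h⟩ := exists_eq_smul_one_add_vecMulVec hpq hpr hqr (orthogonal_comm.1 hxp)
    (orthogonal_comm.1 hxq) (orthogonal_comm.1 hxr) (hrow p hp) (hrow q hq) (hrow r hr)
  refine ⟨a, φ, ?_⟩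
  rw [← transpose_transpose A.1, h, transpose_add, transpose_smul, transpose_one,
    transpose_vecMulVec]

lemma encard_linesIn_le_two_of_fixed_point_of_fixed_lines [DiscreteTopology H] {v : P2}
    {ℓ m : Set P2} (hℓ : IsLine ℓ) (hm : IsLine m) (hℓm : ℓ ≠ m) (hvℓ : v ∉ ℓ) (hvm : v ∉ m)
    (hv : ∀ γ ∈ H, γ • v = v) (hfixℓ : ∀ γ ∈ H, γ • ℓ = ℓ) (hfixm : ∀ γ ∈ H, γ • m = m) :
    (linesIn (regularSet H)ᶜ).encard ≤ 2 := by
  obtain ⟨p, rfl⟩ := exists_polar_eq hℓ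
  obtain ⟨q, rfl⟩ := exists_polar_eq hm
  have hpq : p ≠ q := fun h => hℓm (h ▸ rfl)
  obtain ⟨x, hx⟩ := exists_polar_inter_polar_eq hpq
  obtain ⟨hxp, hxq⟩ : x ∈ polar p ∩ polar q := hx ▸ Set.mem_singleton x
  have hxv : x ≠ v := fun h => hvℓ (h ▸ hxp)
  have hfixx : ∀ γ ∈ H, γ • x = x := fun γ hγ => by
    rw [← Set.singleton_eq_singleton_iff, ← Set.smul_set_singleton, ← hx, Set.smul_set_inter,
      hfixℓ γ hγ, hfixm γ hγ]
  have hvr : v ∈ polar (cross x v) := orthogonal_cross_right hxv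
  have hpr : p ≠ cross x v := fun h => hvℓ (h ▸ hvr)
  have hqr : q ≠ cross x v := fun h => hvm (h ▸ hvr)
  obtain ⟨s, hs⟩ := compl_regularSet_subset_of_center (H := H) hxv fun A hA => by
    obtain ⟨a, φ, haφ⟩ := exists_eq_smul_one_add_vecMulVec_of_smul_polar_eq hpq hpr hqr hxp hxq
      (orthogonal_cross_left hxv) (hfixℓ _ hA) (hfixm _ hA)
      (smul_polar_cross hxv (hfixx _ hA) (hv _ hA))
    obtain ⟨c, hc⟩ := exists_mulVec_rep_eq_smul (hv _ hA)
    have hzero : (φ ⬝ᵥ v.rep) • x.rep + (a - c) • v.rep = 0 := by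
      rw [haφ, add_mulVec, smul_mulVec, one_mulVec, vecMulVec_mulVec, op_smul_eq_smul] at hc
      linear_combination (norm := module) hc
    exact ⟨a, φ, (LinearIndependent.pair_iff.1 (linearIndependent_pair_iff_ne.2 hxv) _ _ hzero).1,
      haφ⟩
  exact encard_linesIn_le_two hs

end Rigidity

/-! ### Families in general position -/

lemma exists_three_of_two_lt_encard {α : Type*} {s : Set α} (h : 2 < s.encard) :
    ∃ a ∈ s, ∃ b ∈ s, ∃ c ∈ s, a ≠ b ∧ a ≠ c ∧ b ≠ c := by
  have h3 : (3 : ℕ∞) ≤ s.encard := by simpa [two_add_one_eq_three] using Order.add_one_le_of_lt h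
  obtain ⟨t, hts, ht⟩ := Set.exists_subset_encard_eq h3
  obtain ⟨a, b, c, hab, hac, hbc, rfl⟩ := Set.encard_eq_three.1 ht
  simp only [Set.insert_subset_iff, Set.singleton_subset_iff] at hts
  exact ⟨a, hts.1, b, hts.2.1, c, hts.2.2, hab, hac, hbc⟩

section GeneralPosition

variable {L : Set (Set P2)}

lemma InGenPos.exists_iInter_eq_empty (hL : InGenPos L) (h : 2 < L.encard) :
    ∃ ℓ : Fin 3 → Set P2, (∀ i, ℓ i ∈ L) ∧ ⋂ i, ℓ i = ∅ := by
  obtain ⟨a, ha, b, hb, c, hc, hab, hac, hbc⟩ := exists_three_of_two_lt_encard h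
  refine ⟨![a, b, c], fun i => by fin_cases i <;> assumption,
    Set.eq_empty_of_forall_notMem fun z hz => ?_⟩
  rw [Set.mem_iInter] at hz
  rcases hL z a ha b hb c hc (hz 0) (hz 1) (hz 2) with h | h | h
  exacts [hab h, hac h, hbc h]

lemma InGenPos.encard_sep_mem_le_two (hL : InGenPos L) (v : P2) :
    {ℓ ∈ L | v ∈ ℓ}.encard ≤ 2 := by
  by_contra! h
  obtain ⟨a, ha, b, hb, c, hc, hab, hac, hbc⟩ := exists_three_of_two_lt_encard h
  rcases hL v a ha.1 b hb.1 c hc.1 ha.2 hb.2 hc.2 with h | h | h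
  exacts [hab h, hac h, hbc h]

lemma InGenPos.one_lt_encard_sep_notMem (hL : InGenPos L) (h4 : 4 ≤ L.encard) (v : P2) :
    1 < {ℓ ∈ L | v ∉ ℓ}.encard := by
  by_contra! hle
  have hsplit : L ⊆ {ℓ ∈ L | v ∈ ℓ} ∪ {ℓ ∈ L | v ∉ ℓ} := fun ℓ hℓ =>
    (_root_.em (v ∈ ℓ)).imp (⟨hℓ, ·⟩) (⟨hℓ, ·⟩)
  have h3 : (4 : ℕ∞) ≤ 2 + 1 := h4.trans <| (Set.encard_le_encard hsplit).trans <|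
    (Set.encard_union_le _ _).trans (add_le_add (hL.encard_sep_mem_le_two v) hle)
  exact absurd h3 (by norm_num)

/-- The points lying on two distinct lines of the family `L`. -/
def doublePts (L : Set (Set P2)) : Set P2 := ⋃ q ∈ L.offDiag, q.1 ∩ q.2

lemma mem_doublePts {d : P2} :
    d ∈ doublePts L ↔ ∃ ℓ ∈ L, ∃ m ∈ L, ℓ ≠ m ∧ d ∈ ℓ ∧ d ∈ m := by
  simp only [doublePts, Set.mem_iUnion, Set.mem_offDiag, Set.mem_inter_iff, Prod.exists,
    exists_prop, and_assoc, exists_and_left]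

lemma finite_doublePts (hL : ∀ ℓ ∈ L, IsLine ℓ) (hf : L.Finite) : (doublePts L).Finite := by
  refine hf.offDiag.biUnion fun q hq => ?_
  obtain ⟨p, hp⟩ := exists_inter_eq_singleton (hL _ hq.1) (hL _ hq.2.1) hq.2.2
  rw [hp]
  exact Set.finite_singleton p

lemma exists_mem_doublePts_of_not_inGenPos_insert (hL : InGenPos L) {s : Set P2}
    (hs : ¬InGenPos (insert s L)) : ∃ d ∈ doublePts L, d ∈ s := by
  unfold InGenPos at hs
  push Not at hs
  obtain ⟨p, a, ha, b, hb, c, hc, hpa, hpb, hpc, hab, hac, hbc⟩ := hs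
  rcases ha with rfl | ha
  · exact ⟨p, mem_doublePts.2 ⟨b, hb.resolve_left hab.symm, c, hc.resolve_left hac.symm,
      hbc, hpb, hpc⟩, hpa⟩
  rcases hb with rfl | hb
  · exact ⟨p, mem_doublePts.2 ⟨a, ha, c, hc.resolve_left hbc.symm, hac, hpa, hpc⟩, hpb⟩
  rcases hc with rfl | hc
  · exact ⟨p, mem_doublePts.2 ⟨a, ha, b, hb, hab, hpa, hpb⟩, hpc⟩
  rcases hL p a ha b hb c hc hpa hpb hpc with h | h | h
  exacts [absurd h hab, absurd h hac, absurd h hbc]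

lemma exists_mem_doublePts {Ω : Set P2} (hL : L ∈ genFamilies Ω) (hcard : L.encard = LiG Ω)
    (hfin : L.Finite) (h1 : 1 < L.encard) {s : Set P2} (hs : s ∈ linesIn Ωᶜ) :
    ∃ d ∈ doublePts L, d ∈ s := by
  by_cases hsL : s ∈ L
  · obtain ⟨m, hm, hne⟩ := Set.exists_ne_of_one_lt_encard h1 s
    obtain ⟨p, hp⟩ := exists_inter_eq_singleton hs.1 (hL.1 m hm).1 hne.symm
    obtain ⟨hps, hpm⟩ : p ∈ s ∩ m := hp ▸ Set.mem_singleton p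
    exact ⟨p, mem_doublePts.2 ⟨s, hsL, m, hm, hne.symm, hps, hpm⟩, hps⟩
  refine exists_mem_doublePts_of_not_inGenPos_insert hL.2 fun hgen => ?_
  have hmem : insert s L ∈ genFamilies Ω := ⟨Set.forall_mem_insert.2 ⟨hs, hL.1⟩, hgen⟩
  have hle : (insert s L).encard ≤ L.encard := hcard ▸ le_iSup₂_of_le _ hmem le_rfl
  rw [Set.encard_insert_of_notMem hsL] at hle
  exact absurd hle (not_le.2 ((ENat.lt_add_one_iff hfin.encard_lt_top.ne).2 le_rfl))

end GeneralPosition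

/-! ### Points on infinitely many lines of the complement -/

section Pencils

variable {Ω D : Set P2}

/-- The points through which infinitely many lines of the complement of `Ω` pass; they turn out to
be the vertices of every maximal family in general position. -/
def pencilPts (Ω : Set P2) : Set P2 := {v | {s ∈ linesIn Ωᶜ | v ∈ s}.Infinite}

lemma pencilPts_subset (hD : D.Finite) (hmeet : ∀ s ∈ linesIn Ωᶜ, ∃ d ∈ D, d ∈ s) :
    pencilPts Ω ⊆ D := by
  intro v hv
  by_contra hvD
  choose! f hfD hfs using hmeet
  refine hv (Set.Finite.of_injOn (f := f) (fun s hs => hfD s hs.1) (fun s hs t ht hst => ?_) hD)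
  have hne : v ≠ f s := fun h => hvD (h ▸ hfD s hs.1)
  exact isLine_unique hs.1.1 ht.1.1 hne hs.2 (hfs s hs.1) ht.2 (hst ▸ hfs t ht.1)

lemma finite_lines_avoiding_pencilPts (hD : D.Finite) (hmeet : ∀ s ∈ linesIn Ωᶜ, ∃ d ∈ D, d ∈ s) :
    {s ∈ linesIn Ωᶜ | Disjoint (pencilPts Ω) s}.Finite := by
  refine ((hD.subset Set.sdiff_subset).biUnion (s := D \ pencilPts Ω)
    fun d hd => Set.not_infinite.1 hd.2).subset ?_
  rintro s ⟨hs, hav⟩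
  obtain ⟨d, hd, hds⟩ := hmeet s hs
  exact Set.mem_biUnion (⟨hd, fun h => hav.notMem_of_mem_left h hds⟩ : d ∈ D \ pencilPts Ω)
    ⟨hs, hds⟩

lemma setOf_isVertex_eq_pencilPts {L : Set (Set P2)} (hL : ∀ ℓ ∈ L, IsLine ℓ)
    (hsub : pencilPts Ω ⊆ doublePts L) : {v | IsVertex Ω L v} = pencilPts Ω := by
  ext v
  constructor
  · rintro ⟨ℓ, -, m, -, -, C, hC, hC', hv⟩
    have hvC : v ∈ ℓ ∩ m ∩ ⋂₀ C := hv ▸ Set.mem_singleton v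
    exact hC.mono fun s hs => ⟨hC' s hs, hvC.2 s hs⟩
  · intro hv
    obtain ⟨ℓ, hℓ, m, hm, hne, hvℓ, hvm⟩ := mem_doublePts.1 (hsub hv)
    refine ⟨ℓ, hℓ, m, hm, hne, _, hv, fun s hs => hs.1, ?_⟩
    obtain ⟨p, hp⟩ := exists_inter_eq_singleton (hL ℓ hℓ) (hL m hm) hne
    obtain rfl : v = p := by
      rw [← Set.mem_singleton_iff, ← hp]
      exact ⟨hvℓ, hvm⟩
    rw [hp, Set.inter_eq_left, Set.singleton_subset_iff]
    exact fun s hs => hs.2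

lemma smul_mem_linesIn_compl {γ : PSL3} (hγ : γ • Ω = Ω) {s : Set P2} (hs : s ∈ linesIn Ωᶜ) :
    γ • s ∈ linesIn Ωᶜ := by
  refine ⟨isLine_smul hs.1 γ, ?_⟩
  rw [← hγ, ← Set.smul_set_compl, Set.smul_set_subset_smul_set_iff]
  exact hs.2

lemma smul_mem_pencilPts {γ : PSL3} (hγ : γ • Ω = Ω) {v : P2} (hv : v ∈ pencilPts Ω) :
    γ • v ∈ pencilPts Ω := by
  refine (Set.Infinite.smul_set (a := γ) hv).mono ?_
  rintro _ ⟨s, hs, rfl⟩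
  exact ⟨smul_mem_linesIn_compl hγ hs.1, Set.smul_mem_smul_set hs.2⟩

end Pencils

/-! ### Counting vertices -/

lemma exists_fixing_subgroup {Γ : Subgroup PSL3} {α : Type*} [MulAction PSL3 α]
    {F : Set α} (hF : F.Finite) (hinv : ∀ γ ∈ Γ, ∀ s ∈ F, γ • s ∈ F) :
    ∃ H ≤ Γ, regularSet H ⊆ regularSet Γ ∧ ∀ γ ∈ H, ∀ s ∈ F, γ • s = s := by
  refine ⟨fixingSubgroup PSL3 F ⊓ Γ, inf_le_right, regularSet_subset_of_relIndex_ne_zero ?_,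
    fun γ hγ => (mem_fixingSubgroup_iff _).1 hγ.1⟩
  rw [Subgroup.inf_relIndex_right]
  exact relIndex_fixingSubgroup_ne_zero hF hinv

lemma encard_linesIn_compl_le {X Y : Set P2} (h : X ⊆ Y) :
    (linesIn Yᶜ).encard ≤ (linesIn Xᶜ).encard :=
  Set.encard_le_encard fun _ hs => ⟨hs.1, hs.2.trans (Set.compl_subset_compl.2 h)⟩

section Counting

variable {Γ : Subgroup PSL3} {Ω : Set P2}

lemma encard_linesIn_le_of_finite (hinv : ∀ γ ∈ Γ, γ • Ω = Ω) (hreg : regularSet Γ ⊆ Ω)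
    (hfin : (linesIn Ωᶜ).Finite) {ι : Type*} [Finite ι] [Nonempty ι] {ℓ : ι → Set P2}
    (hℓ : ∀ i, ℓ i ∈ linesIn Ωᶜ) (hempty : ⋂ i, ℓ i = ∅) :
    (linesIn Ωᶜ).encard ≤ ENat.card ι := by
  obtain ⟨H, -, hH, hfix⟩ := exists_fixing_subgroup hfin
    fun γ hγ s hs => smul_mem_linesIn_compl (hinv γ hγ) hs
  exact (encard_linesIn_compl_le (hH.trans hreg)).trans
    (encard_linesIn_le_of_fixed_lines (fun i => (hℓ i).1) hempty fun γ hγ i => hfix γ hγ _ (hℓ i))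

lemma encard_linesIn_le_two_of_finite_avoiding [DiscreteTopology Γ]
    (hinv : ∀ γ ∈ Γ, γ • Ω = Ω) (hreg : regularSet Γ ⊆ Ω) {v : P2} (hv : ∀ γ ∈ Γ, γ • v = v)
    (hfin : {s ∈ linesIn Ωᶜ | v ∉ s}.Finite) (htwo : 1 < {s ∈ linesIn Ωᶜ | v ∉ s}.encard) :
    (linesIn Ωᶜ).encard ≤ 2 := by
  obtain ⟨ℓ, m, hℓ, hm, hℓm⟩ := Set.one_lt_encard_iff.1 htwo
  obtain ⟨H, hHΓ, hH, hfix⟩ := exists_fixing_subgroup hfin fun γ hγ s hs => by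
    refine ⟨smul_mem_linesIn_compl (hinv γ hγ) hs.1, fun hvs => hs.2 ?_⟩
    rwa [← hv γ hγ, Set.smul_mem_smul_set_iff] at hvs
  have : DiscreteTopology H := DiscreteTopology.of_subset ‹DiscreteTopology Γ› hHΓ
  exact (encard_linesIn_compl_le (hH.trans hreg)).trans
    (encard_linesIn_le_two_of_fixed_point_of_fixed_lines hℓ.1.1 hm.1.1 hℓm hℓ.2 hm.2
      (fun γ hγ => hv γ (hHΓ hγ)) (fun γ hγ => hfix γ hγ ℓ hℓ) fun γ hγ => hfix γ hγ m hm)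

lemma encard_linesIn_le_three_of_finite_invariant [DiscreteTopology Γ]
    (hreg : regularSet Γ ⊆ Ω) {F : Set P2} (hF : F.Finite)
    (hinv : ∀ γ ∈ Γ, ∀ v ∈ F, γ • v ∈ F) (htwo : 2 < F.encard) : (linesIn Ωᶜ).encard ≤ 3 := by
  obtain ⟨x, hx, y, hy, z, hz, hxy, hxz, hyz⟩ := exists_three_of_two_lt_encard htwo
  obtain ⟨H, hHΓ, hH, hfix⟩ := exists_fixing_subgroup hF hinv
  have : DiscreteTopology H := DiscreteTopology.of_subset ‹DiscreteTopology Γ› hHΓ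
  exact (encard_linesIn_compl_le (hH.trans hreg)).trans
    (encard_linesIn_le_three_of_fixed_points hxy hxz hyz (fun γ hγ => hfix γ hγ x hx)
      (fun γ hγ => hfix γ hγ y hy) fun γ hγ => hfix γ hγ z hz)

lemma encard_linesIn_le_three_of_encard_pencilPts_ne_two [DiscreteTopology Γ]
    (hinv : ∀ γ ∈ Γ, γ • Ω = Ω) (hreg : regularSet Γ ⊆ Ω) {L : Set (Set P2)}
    (hL : L ∈ genFamilies Ω) (h4 : 4 ≤ L.encard) {D : Set P2} (hD : D.Finite)
    (hmeet : ∀ s ∈ linesIn Ωᶜ, ∃ d ∈ D, d ∈ s) (hne : (pencilPts Ω).encard ≠ 2) :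
    (linesIn Ωᶜ).encard ≤ 3 := by
  have hpencil : ∀ γ ∈ Γ, ∀ v ∈ pencilPts Ω, γ • v ∈ pencilPts Ω :=
    fun γ hγ v hv => smul_mem_pencilPts (hinv γ hγ) hv
  have havoid := finite_lines_avoiding_pencilPts hD hmeet
  rcases lt_or_gt_of_ne hne with hlt | hgt
  · rcases Set.encard_le_one_iff_eq.1 (ENat.lt_add_one_iff ENat.one_ne_top |>.1
      (by rwa [one_add_one_eq_two])) with hempty | ⟨v, hv⟩
    · obtain ⟨ℓ, hℓ, hℓ_empty⟩ := hL.2.exists_iInter_eq_empty (lt_of_lt_of_le (by norm_num) h4)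
      refine (encard_linesIn_le_of_finite hinv hreg (havoid.subset fun s hs => ⟨hs, ?_⟩)
        (fun i => hL.1 _ (hℓ i)) hℓ_empty).trans_eq ENat.card_eq_coe_fintype_card
      rw [hempty]
      exact Set.empty_disjoint s
    · simp only [hv, Set.disjoint_singleton_left] at havoid
      refine (encard_linesIn_le_two_of_finite_avoiding hinv hreg (fun γ hγ => ?_) havoid
        ((hL.2.one_lt_encard_sep_notMem h4 v).trans_le (Set.encard_le_encard fun s hs =>
          ⟨hL.1 s hs.1, hs.2⟩))).trans (by norm_num)
      simpa [hv] using hpencil γ hγ v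
  · exact encard_linesIn_le_three_of_finite_invariant hreg (hD.subset (pencilPts_subset hD hmeet))
      hpencil hgt

theorem exactly_two_vertices_general [DiscreteTopology Γ] (hinv : ∀ γ ∈ Γ, γ • Ω = Ω)
    (hreg : regularSet Γ ⊆ Ω) (h4 : 4 ≤ LiG Ω) (hfin : LiG Ω ≠ ⊤) {L : Set (Set P2)}
    (hL : L ∈ genFamilies Ω) (hcard : L.encard = LiG Ω) : {v : P2 | IsVertex Ω L v}.encard = 2 := by
  have hLfin : L.Finite := Set.encard_ne_top_iff.1 (hcard ▸ hfin)
  have h4L : 4 ≤ L.encard := hcard ▸ h4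
  have hlines : ∀ ℓ ∈ L, IsLine ℓ := fun ℓ hℓ => (hL.1 ℓ hℓ).1
  have hD := finite_doublePts hlines hLfin
  have hmeet : ∀ s ∈ linesIn Ωᶜ, ∃ d ∈ doublePts L, d ∈ s :=
    fun s hs => exists_mem_doublePts hL hcard hLfin (lt_of_lt_of_le (by norm_num) h4L) hs
  rw [setOf_isVertex_eq_pencilPts hlines (pencilPts_subset hD hmeet)]
  by_contra hne
  have h43 : (4 : ℕ∞) ≤ 3 := h4L.trans <| (Set.encard_le_encard hL.1).trans <|
    encard_linesIn_le_three_of_encard_pencilPts_ne_two hinv hreg hL h4L hD hmeet hne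
  exact absurd h43 (by norm_num)

end Counting

theorem exactly_two_vertices
    (Γ : Subgroup PSL3) (hΓ : DiscreteTopology ↥Γ) (Ω : Set P2)
    (hΩ : Ω = eqSet Γ ∨ Ω = kulkarniRegion Γ ∨ MaxDisc Γ Ω)
    (h4 : 4 ≤ LiG Ω) (hfin : LiG Ω ≠ ⊤)
    (L : Set (Set P2)) (hL : L ∈ genFamilies Ω) (hcard : L.encard = LiG Ω) :
    {v : P2 | IsVertex Ω L v}.encard = 2 :=
  exactly_two_vertices_general (fun _ hγ => smul_region_eq hΩ hγ) (regularSet_subset hΩ) h4 hfin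
    hL hcard
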